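/- arXiv:2408.05871 — 8 statements merged into one kernel-verified Lean document; each statement's English description precedes it below -/
import Mathlib

section
/- For every convexity space (X, C), if the Radon number satisfies r(X, C) ≤ r for some integer r, then the Helly number satisfies h(X, C) ≤ r − 1. -/
open scoped Classical

universe u

section SetSystems

variable {X : Type*}

/-- A finite family of sets is intersecting if all of its members have a common element. -/
def IsIntersecting (F : Finset (Set X)) : Prop :=
  ∃ x, ∀ K ∈ F, x ∈ K

/-- A convexity space: `∅` and the whole space are convex, convexity is closed under
arbitrary (nonempty) intersections and under unions of (nonempty) chains. -/
def IsConvexitySpace (C : Set (Set X)) : Prop :=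
  ∅ ∈ C ∧ Set.univ ∈ C ∧
    (∀ D ⊆ C, D.Nonempty → ⋂₀ D ∈ C) ∧
    (∀ D ⊆ C, D.Nonempty → IsChain (· ⊆ ·) D → ⋃₀ D ∈ C)

/-- The convex hull of `Y`: intersection of all convex sets containing `Y`. -/
def convHull (C : Set (Set X)) (Y : Set X) : Set X :=
  ⋂₀ {K | K ∈ C ∧ Y ⊆ K}

/-- `Y` admits a Radon partition: a partition into two disjoint parts whose hulls meet. -/
def HasRadonPartition (C : Set (Set X)) (Y : Finset X) : Prop :=
  ∃ A B : Finset X, (↑A ∪ ↑B : Set X) = ↑Y ∧ Disjoint (↑A : Set X) (↑B : Set X) ∧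
    (convHull C ↑A ∩ convHull C ↑B).Nonempty

/-- The Radon number is at most `n`: every finite subset of size at least `n`
admits a Radon partition. -/
def RadonLE (C : Set (Set X)) (n : ℕ) : Prop :=
  ∀ Y : Finset X, n ≤ Y.card → HasRadonPartition C Y

/-- `Y` admits a Tverberg `k`-partition: a partition into `k` pairwise disjoint parts
whose hulls have a common point. -/
def HasTverbergPartition (C : Set (Set X)) (k : ℕ) (Y : Finset X) : Prop :=
  ∃ P : Fin k → Finset X, (⋃ i, (↑(P i) : Set X)) = ↑Y ∧
    (∀ i j, i ≠ j → Disjoint (↑(P i) : Set X) (↑(P j) : Set X)) ∧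
    (⋂ i, convHull C ↑(P i)).Nonempty

/-- A minimally non-intersecting family: not intersecting, but every proper subfamily
obtained by deleting one member is intersecting. -/
def MinNonIntersecting (F : Finset (Set X)) : Prop :=
  ¬ IsIntersecting F ∧ ∀ K ∈ F, IsIntersecting (F.erase K)

/-- The Helly number of the set system `S` is at most `n`. -/
def HellyLE (S : Set (Set X)) (n : ℕ) : Prop :=
  ∀ F : Finset (Set X), ↑F ⊆ S → MinNonIntersecting F → F.card ≤ n

/-- The colorful Helly number of the set system `S` is at most `m`. -/
def ColorfulHellyLE (S : Set (Set X)) (m : ℕ) : Prop :=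
  ∀ F : Fin m → Finset (Set X), (∀ i, ↑(F i) ⊆ S) →
    (∀ K : Fin m → Set X, (∀ i, K i ∈ F i) → (⋂ i, K i).Nonempty) →
    ∃ i, IsIntersecting (F i)

/-- `S` satisfies the fractional Helly property for `k`-tuples with function `β`. -/
def FracHelly (S : Set (Set X)) (k : ℕ) (β : ℝ → ℝ) : Prop :=
  ∀ α ∈ Set.Ioo (0 : ℝ) 1, ∀ F : Finset (Set X), ↑F ⊆ S →
    α * (F.card.choose k : ℝ) ≤
      (((F.powersetCard k).filter (fun G => IsIntersecting G)).card : ℝ) →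
    ∃ G ⊆ F, IsIntersecting G ∧ β α * (F.card : ℝ) ≤ (G.card : ℝ)

/-- The transversal number of the finite family `F` is at most `n`: `F` can be
partitioned into (at most) `n` intersecting subfamilies. -/
def TransversalLE (F : Finset (Set X)) (n : ℕ) : Prop :=
  ∃ P : Fin n → Finset (Set X), (∀ i, P i ⊆ F) ∧ (∀ K ∈ F, ∃! i, K ∈ P i) ∧
    ∀ i, (P i).Nonempty → IsIntersecting (P i)

/-- The fractional transversal number of `F` is at most `t`: there is a finitely supported
fractional transversal of total weight at most `t`. -/
def FracTransversalLE (F : Finset (Set X)) (t : ℝ) : Prop :=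
  ∃ f : X →₀ ℝ, (∀ x, 0 ≤ f x ∧ f x ≤ 1) ∧
    (∀ S ∈ F, 1 ≤ ∑ x ∈ f.support.filter (fun x => x ∈ S), f x) ∧
    (∑ x ∈ f.support, f x) ≤ t

/-- The weak ε-net property: there is a function `g` bounding the transversal number of
every finite subfamily in terms of its fractional transversal number. -/
def WeakEpsNetProp (S : Set (Set X)) : Prop :=
  ∃ g : ℝ → ℕ, ∀ F : Finset (Set X), ↑F ⊆ S → ∀ t : ℝ,
    FracTransversalLE F t → (∀ s : ℝ, FracTransversalLE F s → t ≤ s) →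
    TransversalLE F (g t)

/-- The `(p,q)`-property: among any `p` members (with repetition allowed) some `q`
of them are intersecting. -/
def PQProperty (F : Finset (Set X)) (p q : ℕ) : Prop :=
  ∀ K : Fin p → Set X, (∀ i, K i ∈ F) →
    ∃ s : Finset (Fin p), s.card = q ∧ ∃ x, ∀ i ∈ s, x ∈ K i

/-- A compact set system: every subsystem with empty total intersection contains a
finite subfamily with empty intersection. -/
def CompactSystem (S : Set (Set X)) : Prop :=
  ∀ T ⊆ S, ⋂₀ T = ∅ → ∃ F : Finset (Set X), ↑F ⊆ T ∧ ⋂₀ (↑F : Set (Set X)) = ∅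

/-- The VC-dimension of `S` is at most `d`: every finite set shattered by `S` has
size at most `d`. -/
def VCDimLE (S : Set (Set X)) (d : ℕ) : Prop :=
  ∀ Y : Finset X, (∀ Z ⊆ Y, ∃ K ∈ S, (↑Y : Set X) ∩ K = ↑Z) → Y.card ≤ d

/-- `S^∩`: all intersections of nonempty subcollections of `S`. -/
def interClosure (S : Set (Set X)) : Set (Set X) :=
  {T | ∃ D ⊆ S, D.Nonempty ∧ T = ⋂₀ D}

end SetSystems

section Hypergraphs

variable {V : Type*} [DecidableEq V]

/-- An independent set of the hypergraph with edge set `E`: contains no edge. -/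
def IsIndep (E : Finset (Finset V)) (I : Set V) : Prop :=
  ∀ e ∈ E, ¬ ((↑e : Set V) ⊆ I)

/-- A maximal independent set. -/
def IsMaxIndep (E : Finset (Finset V)) (I : Set V) : Prop :=
  IsIndep E I ∧ ∀ J : Set V, IsIndep E J → I ⊆ J → J = I

/-- The ground set of the associated convexity space: the maximal independent sets. -/
abbrev MIS (E : Finset (Finset V)) : Type _ := {σ : Set V // IsMaxIndep E σ}

/-- `S_W`: the maximal independent sets containing `W`. -/
def SW (E : Finset (Finset V)) (W : Set V) : Set (MIS E) :=
  {σ : MIS E | W ⊆ σ.1}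

/-- The associated convexity space of the hypergraph with edge set `E`. -/
def assocC (E : Finset (Finset V)) : Set (Set (MIS E)) :=
  {T | ∃ W : Set V, T = SW E W}

/-- Property `T_k(m)`: among any `m` (not necessarily distinct) edges, some `k` of them
admit a system of distinct representatives which is an edge. -/
def PropT (E : Finset (Finset V)) (k m : ℕ) : Prop :=
  ∀ e : Fin m → Finset V, (∀ i, e i ∈ E) →
    ∃ (g : Fin k → Fin m) (v : Fin k → V), StrictMono g ∧ Function.Injective v ∧
      (∀ j, v j ∈ e (g j)) ∧ Finset.image v Finset.univ ∈ E

/-- The chromatic number of the hypergraph is at most `n`: the vertex set can be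
partitioned into (at most) `n` independent sets. -/
def ChromaticLE (E : Finset (Finset V)) (n : ℕ) : Prop :=
  ∃ P : Fin n → Set V, (∀ v : V, ∃! i, v ∈ P i) ∧
    ∀ i, (P i).Nonempty → IsIndep E (P i)

/-- The clique number is at most `w`: every set of vertices all of whose `k`-element
subsets are edges has size at most `w`. -/
def CliqueNumLE (E : Finset (Finset V)) (k w : ℕ) : Prop :=
  ∀ Q : Finset V, (∀ q ⊆ Q, q.card = k → q ∈ E) → Q.card ≤ w

/-- Property `δ_k(m)`: any sunflower of `m` edges contains `k` edges admitting a system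
of distinct representatives which is an edge. -/
def PropDelta (E : Finset (Finset V)) (k m : ℕ) : Prop :=
  ∀ G : Finset (Finset V), G ⊆ E → G.card = m →
    (∃ S : Finset V, ∀ e ∈ G, ∀ e' ∈ G, e ≠ e' → e ∩ e' = S) →
    ∃ (f : Fin k → Finset V) (v : Fin k → V), Function.Injective f ∧ (∀ j, f j ∈ G) ∧
      Function.Injective v ∧ (∀ j, v j ∈ f j) ∧ Finset.image v Finset.univ ∈ E

end Hypergraphs

/-- (Levi) If the Radon number of a convexity space is at most `r`,
then its Helly number is at most `r - 1`. -/
theorem helly_le_radon_sub_one {X : Type u} [Nonempty X] (C : Set (Set X))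
    (hC : IsConvexitySpace C) (r : ℕ) (hr : RadonLE C r) :
    HellyLE C (r - 1) := by
  intro F hF hmin
  obtain ⟨hni, hdel⟩ := hmin
  have hr0 : r ≠ 0 := by
    rintro rfl
    obtain ⟨A, B, hAB, -, z, hzA, -⟩ := hr ∅ (Nat.zero_le _)
    have hA : (A : Set X) ⊆ ∅ := by
      intro a ha
      have h1 : a ∈ (↑A ∪ ↑B : Set X) := Or.inl ha
      rw [hAB] at h1
      simpa using h1
    exact hzA ∅ ⟨hC.1, hA⟩
  by_contra hcard
  have hrF : r ≤ F.card := by omega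
  have hdel' : ∀ K : Set X, ∃ x, K ∈ F → ∀ L ∈ F, L ≠ K → x ∈ L := by
    intro K
    by_cases hK : K ∈ F
    · obtain ⟨x, hx⟩ := hdel K hK
      exact ⟨x, fun _ L hL hne => hx L (Finset.mem_erase.2 ⟨hne, hL⟩)⟩
    · exact ⟨Classical.arbitrary X, fun h => absurd h hK⟩
  choose f hf using hdel'
  have hinj : Set.InjOn f (F : Set (Set X)) := by
    intro K hK L hL hKL
    by_contra hne
    apply hni
    refine ⟨f K, fun M hM => ?_⟩
    by_cases hMK : M = K
    · rw [hKL]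
      exact hf L hL M hM (by rw [hMK]; exact hne)
    · exact hf K hK M hM hMK
  obtain ⟨A, B, hAB, hdisj, z, hzA, hzB⟩ := hr (F.image f)
    (by rw [Finset.card_image_of_injOn hinj]; exact hrF)
  have key : ∀ S : Finset X, (S : Set X) ⊆ (F.image f : Finset X) → z ∈ convHull C ↑S →
      ∀ K ∈ F, f K ∉ S → z ∈ K := by
    intro S hS hz K hK hfK
    refine hz K ⟨hF hK, fun a ha => ?_⟩
    obtain ⟨L, hL, rfl⟩ := Finset.mem_image.1 (Finset.mem_coe.1 (hS ha))
    refine hf L hL K hK ?_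
    rintro rfl
    exact hfK ha
  apply hni
  refine ⟨z, fun K hK => ?_⟩
  by_cases hA : f K ∈ A
  · refine key B (hAB ▸ Set.subset_union_right) hzB K hK fun hB => ?_
    exact Set.disjoint_left.1 hdisj hA hB
  · exact key A (hAB ▸ Set.subset_union_left) hzA K hK hA
end

section
/- For every integer k ≥ 3 there exists a convexity space (X, C) whose Radon number equals 4 and whose k-th Tverberg number satisfies t_k(X, C) ≥ 3k − 1; that is, every subset of X of size 4 admits a Radon partition, some subset of size 3 admits no Radon partition, and some subset of X of size 3k − 2 admits no Tverberg k-partition. -/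
open scoped Classical

universe u

namespace Bukh

/-- base family -/
def fB {α : Type} (p : α) : Set (Finset α) := {A | p ∈ A ∨ 4 ≤ A.card}

/-- derived family -/
def fD {α : Type} (e f : Finset α) : Set (Finset α) :=
  {A | 4 ≤ A.card ∨ A = e ∨ A = f ∨ (A.card = 3 ∧ (e = f ∨ ∃ x ∈ A, x ∈ e ∨ x ∈ f))}

def okD {α : Type} (e f : Finset α) : Prop :=
  e.card = 2 ∧ f.card = 2 ∧ (e = f ∨ ∀ x ∈ e, x ∉ f)

def IsPt {α : Type} (F : Set (Finset α)) : Prop :=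
  (∃ p, F = fB p) ∨ ∃ e f, okD e f ∧ F = fD e f

/-- bounded from above by a point -/
def Bd {α : Type} (U : Set (Finset α)) : Prop := ∃ G, IsPt G ∧ U ⊆ G

/-- Radon condition on four families -/
def Rad {α : Type} (a b c d : Set (Finset α)) : Prop :=
  Bd (a ∩ b ∪ c ∩ d) ∨ Bd (a ∩ c ∪ b ∩ d) ∨ Bd (a ∩ d ∪ b ∩ c) ∨
  a ∩ b ∩ c ⊆ d ∨ a ∩ b ∩ d ⊆ c ∨ a ∩ c ∩ d ⊆ b ∨ b ∩ c ∩ d ⊆ a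

section
variable {α : Type}

lemma Rad.s12 {a b c d : Set (Finset α)} (h : Rad a b c d) : Rad b a c d := by
  unfold Rad at *
  rw [Set.inter_comm b a]
  rw [Set.union_comm (b ∩ c), Set.union_comm (b ∩ d)]
  tauto

lemma Rad.s23 {a b c d : Set (Finset α)} (h : Rad a b c d) : Rad a c b d := by
  unfold Rad at *
  rw [Set.inter_comm c b, Set.inter_right_comm a c b]
  tauto

lemma Rad.s34 {a b c d : Set (Finset α)} (h : Rad a b c d) : Rad a b d c := by
  unfold Rad at *
  rw [Set.inter_comm d c, Set.inter_right_comm a d c, Set.inter_right_comm b d c]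
  tauto

lemma card_pair_sub {a b : α} {A : Finset α} (hab : a ≠ b) (ha : a ∈ A) (hb : b ∈ A) :
    3 ≤ A.card ∨ A = {a, b} := by
  have h2 : ({a, b} : Finset α).card = 2 := Finset.card_pair hab
  have hs : ({a, b} : Finset α) ⊆ A := by
    intro x hx
    simp only [Finset.mem_insert, Finset.mem_singleton] at hx
    rcases hx with rfl | rfl <;> assumption
  by_cases h : 3 ≤ A.card
  · exact Or.inl h
  · right
    exact (Finset.eq_of_subset_of_card_le hs (by omega)).symm

lemma pair_eq {a b : α} {e : Finset α} (he : e.card = 2) (hab : a ≠ b) (ha : a ∈ e) (hb : b ∈ e) :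
    e = {a, b} := by
  rcases card_pair_sub hab ha hb with h | h
  · omega
  · exact h

/-- at most one edge -/
lemma bd_small {U : Set (Finset α)} (g : Finset α) (hg : g.card = 2)
    (h : ∀ A ∈ U, 3 ≤ A.card ∨ A = g) : Bd U := by
  refine ⟨fD g g, Or.inr ⟨g, g, ⟨hg, hg, Or.inl rfl⟩, rfl⟩, ?_⟩
  intro A hA
  have := h A hA
  simp only [fD, Set.mem_ofPred_eq]
  by_cases h4 : 4 ≤ A.card
  · exact Or.inl h4
  · rcases this with h | h
    · exact Or.inr (Or.inr (Or.inr ⟨by omega, by simp⟩))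
    · exact Or.inr (Or.inl h)

lemma bd_D {U : Set (Finset α)} {e f : Finset α} (hg : okD e f)
    (h : U ⊆ fD e f) : Bd U := ⟨_, Or.inr ⟨e, f, hg, rfl⟩, h⟩

lemma D_edges {e f A : Finset α} (h : A ∈ fD e f) : 3 ≤ A.card ∨ A = e ∨ A = f := by
  simp only [fD, Set.mem_ofPred_eq] at h
  rcases h with h | h | h | h
  · left; omega
  · tauto
  · tauto
  · left; omega

lemma BB {a b : α} {A : Finset α} (hab : a ≠ b) (ha : A ∈ fB a) (hb : A ∈ fB b) :
    3 ≤ A.card ∨ A = {a, b} := by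
  simp only [fB, Set.mem_ofPred_eq] at ha hb
  rcases ha with ha | ha
  · rcases hb with hb | hb
    · exact card_pair_sub hab ha hb
    · left; omega
  · left; omega

lemma fD_comm (e f : Finset α) : fD e f = fD f e := by
  ext A
  simp only [fD, Set.mem_ofPred_eq]
  constructor <;> rintro (h | h | h | ⟨h, h' | ⟨x, h1, h2⟩⟩) <;> grind

lemma okD_comm {e f : Finset α} (h : okD e f) : okD f e := by
  unfold okD at *
  grind

lemma BD {a : α} {e f A : Finset α} (ha : A ∈ fB a) (h : A ∈ fD e f) :
    3 ≤ A.card ∨ (A = e ∧ a ∈ e) ∨ (A = f ∧ a ∈ f) := by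
  rcases ha with ha | ha
  · rcases D_edges h with h | h | h
    · tauto
    · subst h; tauto
    · subst h; tauto
  · left; omega

/-- `fB a ∩ fD e f` has at most one edge -/
lemma BD1 {a : α} {e f : Finset α} (h : okD e f) :
    ∃ g : Finset α, g.card = 2 ∧ ∀ A ∈ fB a ∩ fD e f, 3 ≤ A.card ∨ A = g := by
  obtain ⟨h1, h2, h3⟩ := h
  by_cases hae : a ∈ e
  · refine ⟨e, h1, fun A hA => ?_⟩
    rcases BD hA.1 hA.2 with h | h | h
    · tauto
    · tauto
    · rcases h3 with h3 | h3
      · subst h3; tauto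
      · exact absurd h.2 (h3 a hae)
  · refine ⟨f, h2, fun A hA => ?_⟩
    rcases BD hA.1 hA.2 with h | h | h <;> tauto

lemma DD1 {e f e' f' : Finset α} (h : okD e f) (h' : okD e' f') (hne : fD e f ≠ fD e' f') :
    ∃ g : Finset α, g.card = 2 ∧ ∀ A ∈ fD e f ∩ fD e' f', 3 ≤ A.card ∨ A = g := by
  by_cases h1 : e = e' ∨ e = f'
  · refine ⟨e, h.1, fun A hA => ?_⟩
    have a1 := D_edges hA.1
    have a2 := D_edges hA.2
    by_cases hc : 3 ≤ A.card
    · exact Or.inl hc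
    right
    by_contra hAe
    have : A = f := by tauto
    have hf : A = e' ∨ A = f' := by tauto
    apply hne
    rcases h1 with rfl | rfl
    · have : f = f' := by grind
      rw [this]
    · have : f = e' := by grind
      rw [this, fD_comm]
  · refine ⟨f, h.2.1, fun A hA => ?_⟩
    have a1 := D_edges hA.1
    have a2 := D_edges hA.2
    grind

/-! ### four base points -/

lemma rad4 {a b c d : α} (hab : a ≠ b) (hac : a ≠ c) (had : a ≠ d) (hbc : b ≠ c) (hbd : b ≠ d)
    (hcd : c ≠ d) : Rad (fB a) (fB b) (fB c) (fB d) := by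
  left
  apply bd_D (e := {a, b}) (f := {c, d})
  · refine ⟨Finset.card_pair hab, Finset.card_pair hcd, Or.inr ?_⟩
    intro x hx
    simp only [Finset.mem_insert, Finset.mem_singleton] at hx ⊢
    grind
  · rintro A (⟨h1, h2⟩ | ⟨h1, h2⟩)
    · have := BB hab h1 h2
      simp only [fB, fD, Set.mem_ofPred_eq, Finset.mem_insert, Finset.mem_singleton] at *
      by_cases h4 : 4 ≤ A.card
      · tauto
      · rcases this with h | h
        · right; right; right
          exact ⟨by omega, Or.inr ⟨a, by tauto, by tauto⟩⟩
        · tauto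
    · have := BB hcd h1 h2
      simp only [fB, fD, Set.mem_ofPred_eq, Finset.mem_insert, Finset.mem_singleton] at *
      by_cases h4 : 4 ≤ A.card
      · tauto
      · rcases this with h | h
        · right; right; right
          exact ⟨by omega, Or.inr ⟨c, by tauto, by tauto⟩⟩
        · tauto

/-! ### three base points -/

lemma rad3a {a b c : α} {e f : Finset α} (hab : a ≠ b)
    (h1 : c ∉ e) (h2 : c ∉ f) : Bd (fB a ∩ fB b ∪ fB c ∩ fD e f) := by
  apply bd_small {a, b} (Finset.card_pair hab)
  rintro A (⟨x, y⟩ | ⟨x, y⟩)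
  · exact BB hab x y
  · have := BD x y
    tauto

lemma rad3b {a b c : α} {e f : Finset α} (hab : a ≠ b) (h : okD e f)
    (h1 : a ∈ e) (h2 : b ∈ e) : Bd (fB a ∩ fB b ∪ fB c ∩ fD e f) := by
  apply bd_D h
  have he := pair_eq h.1 hab h1 h2
  rintro A (⟨x, y⟩ | ⟨x, y⟩)
  · have := BB hab x y
    rw [← he] at this
    simp only [fB, fD, Set.mem_ofPred_eq] at *
    by_cases h4 : 4 ≤ A.card
    · tauto
    · rcases this with h | h
      · right; right; right
        exact ⟨by omega, Or.inr ⟨a, by tauto, by tauto⟩⟩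
      · tauto
  · exact y

lemma rad3c {a b c : α} {e f : Finset α} (hab : a ≠ b) (h : okD e f)
    (h1 : a ∈ f) (h2 : b ∈ f) : Bd (fB a ∩ fB b ∪ fB c ∩ fD e f) := by
  rw [fD_comm]
  exact rad3b hab (okD_comm h) h1 h2

lemma rad3 {a b c : α} {e f : Finset α} (hab : a ≠ b) (hac : a ≠ c) (hbc : b ≠ c)
    (h : okD e f) : Rad (fB a) (fB b) (fB c) (fD e f) := by
  unfold Rad
  rw [Set.union_comm (fB a ∩ fD e f)]
  by_cases hc : c ∉ e ∧ c ∉ f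
  · exact Or.inl (rad3a hab hc.1 hc.2)
  by_cases hb : b ∉ e ∧ b ∉ f
  · exact Or.inr (Or.inl (rad3a hac hb.1 hb.2))
  by_cases ha : a ∉ e ∧ a ∉ f
  · exact Or.inr (Or.inr (Or.inl (rad3a hbc ha.1 ha.2)))
  by_cases a ∈ e <;> by_cases b ∈ e <;> by_cases c ∈ e
  all_goals first
    | exact Or.inl (rad3b hab h (by tauto) (by tauto))
    | exact Or.inr (Or.inl (rad3b hac h (by tauto) (by tauto)))
    | exact Or.inr (Or.inr (Or.inl (rad3b hbc h (by tauto) (by tauto))))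
    | exact Or.inl (rad3c hab h (by tauto) (by tauto))
    | exact Or.inr (Or.inl (rad3c hac h (by tauto) (by tauto)))
    | exact Or.inr (Or.inr (Or.inl (rad3c hbc h (by tauto) (by tauto))))

/-! ### two base points -/

lemma rad2e_aux {a b : α} {e f f' : Finset α} (h : okD e f) (h' : okD e f')
    (ha : a ∈ e) (hb : b ∉ e) :
    Bd (fB a ∩ fD e f ∪ fB b ∩ fD e f') ∨ Bd (fB a ∩ fD e f' ∪ fB b ∩ fD e f) := by
  have ok3 := h.2.2
  have ok3' := h'.2.2
  by_cases h1 : b ∈ f'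
  · left
    apply bd_D h'
    rintro A (⟨x, y⟩ | ⟨x, y⟩)
    · have := BD x y
      simp only [fB, fD, Set.mem_ofPred_eq] at *
      by_cases h4 : 4 ≤ A.card
      · tauto
      · rcases this with h | h | h
        · right; right; right
          exact ⟨by omega, Or.inr ⟨a, by tauto, by tauto⟩⟩
        · tauto
        · rcases ok3 with h3 | h3
          · subst h3; tauto
          · exact absurd h.2 (h3 a ha)
    · exact y
  · left
    apply bd_small e h.1
    rintro A (⟨x, y⟩ | ⟨x, y⟩)
    · have := BD x y
      rcases ok3 with h3 | h3
      · subst h3; tauto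
      · have := h3 a ha; tauto
    · have := BD x y
      tauto

lemma rad2e {a b : α} {e f f' : Finset α} (hab : a ≠ b) (h : okD e f) (h' : okD e f') :
    Rad (fB a) (fB b) (fD e f) (fD e f') := by
  have ok3 := h.2.2
  have ok3' := h'.2.2
  by_cases ha : a ∈ e <;> by_cases hb : b ∈ e
  · right; left
    apply bd_small e h.1
    rintro A (⟨x, y⟩ | ⟨x, y⟩)
    · have := BD x y
      rcases ok3 with h3 | h3
      · subst h3; tauto
      · have := h3 a ha; tauto
    · have := BD x y
      rcases ok3' with h3 | h3
      · subst h3; tauto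
      · have := h3 b hb; tauto
  · have := rad2e_aux h h' ha hb
    unfold Rad
    tauto
  · have := rad2e_aux h' h hb ha
    rw [Set.union_comm, Set.union_comm (fB b ∩ fD e f)] at this
    unfold Rad
    tauto
  · by_cases h1 : a ∈ f
    · by_cases h2 : b ∈ f'
      · by_cases h3 : b ∈ f
        · by_cases h4 : a ∈ f'
          · have e1 := pair_eq h.2.1 hab h1 h3
            have e2 := pair_eq h'.2.1 hab h4 h2
            right; left
            apply bd_D h
            rintro A (⟨x, y⟩ | ⟨x, y⟩)
            · exact y
            · rw [e1, ← e2]; exact y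
          · right; right; left
            apply bd_small f h.2.1
            rintro A (⟨x, y⟩ | ⟨x, y⟩) <;> have := BD x y <;> tauto
        · right; right; left
          apply bd_small f' h'.2.1
          rintro A (⟨x, y⟩ | ⟨x, y⟩) <;> have := BD x y <;> tauto
      · right; left
        apply bd_small f h.2.1
        rintro A (⟨x, y⟩ | ⟨x, y⟩) <;> have := BD x y <;> tauto
    · right; left
      apply bd_small f' h'.2.1
      rintro A (⟨x, y⟩ | ⟨x, y⟩) <;> have := BD x y <;> tauto

lemma rad2 {a b : α} {e f e' f' : Finset α} (hab : a ≠ b) (h : okD e f) (h' : okD e' f') :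
    Rad (fB a) (fB b) (fD e f) (fD e' f') := by
  by_cases h1 : e = e'
  · subst h1; exact rad2e hab h h'
  by_cases h2 : e = f'
  · subst h2; rw [fD_comm e' e]; exact rad2e hab h (okD_comm h')
  by_cases h3 : f = e'
  · subst h3; rw [fD_comm e f]; exact rad2e hab (okD_comm h) h'
  by_cases h4 : f = f'
  · subst h4; rw [fD_comm e f, fD_comm e' f]; exact rad2e hab (okD_comm h) (okD_comm h')
  left
  apply bd_small {a, b} (Finset.card_pair hab)
  rintro A (⟨x, y⟩ | ⟨x, y⟩)
  · exact BB hab x y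
  · have := D_edges x
    have := D_edges y
    grind

/-! ### one base point -/

lemma rad1a {a : α} {e f : Finset α} {F G : Set (Finset α)} (h : okD e f)
    (hFG : ∀ A ∈ F ∩ G, 3 ≤ A.card) : Bd (fB a ∩ fD e f ∪ F ∩ G) := by
  obtain ⟨g, hg, hh⟩ := BD1 (a := a) h
  apply bd_small g hg
  rintro A (h | h)
  · exact hh A h
  · exact Or.inl (hFG A h)

lemma rad1e {a : α} {e f g h : Finset α} (h1 : okD e f) (h2 : okD e g) (h3 : okD e h)
    (h12 : fD e f ≠ fD e g) (h13 : fD e f ≠ fD e h) (h23 : fD e g ≠ fD e h) :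
    Rad (fB a) (fD e f) (fD e g) (fD e h) := by
  have key : ∀ f g h : Finset α, okD e f → okD e g → okD e h → fD e g ≠ fD e h →
      (a ∈ e ∨ a ∉ f) → Bd (fB a ∩ fD e f ∪ fD e g ∩ fD e h) := by
    intro f g h h1 h2 h3 hne hh
    apply bd_small e h1.1
    rintro A (⟨x, y⟩ | ⟨x, y⟩)
    · have := BD x y
      rcases h1.2.2 with h4 | h4
      · subst h4; tauto
      · have := h4 a; tauto
    · have a1 := D_edges x
      have a2 := D_edges y
      have : g ≠ h := by rintro rfl; exact hne rfl
      grind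
  by_cases c1 : a ∈ e ∨ a ∉ f
  · left; exact key _ _ _ h1 h2 h3 h23 c1
  by_cases c2 : a ∈ e ∨ a ∉ g
  · right; left; exact key _ _ _ h2 h1 h3 h13 c2
  by_cases c3 : a ∈ e ∨ a ∉ h
  · right; right; left; exact key _ _ _ h3 h1 h2 h12 c3
  push Not at c1 c2 c3
  right; right; right; right; right; left
  rintro A ⟨⟨x, y⟩, z⟩
  have b1 := BD x y
  have b2 := BD x z
  have : g ≠ h := by rintro rfl; exact h23 rfl
  have b3 : 3 ≤ A.card := by grind
  by_cases h4 : 4 ≤ A.card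
  · exact Or.inl h4
  · right; right; right
    exact ⟨by omega, Or.inr ⟨a, x.resolve_right h4, Or.inr c1.2⟩⟩

lemma rad1t {a : α} {e f g : Finset α} (h1 : okD e f) (h2 : okD e g) (h3 : okD f g)
    (h12 : fD e f ≠ fD e g) (h13 : fD e f ≠ fD f g) (h23 : fD e g ≠ fD f g) :
    Rad (fB a) (fD e f) (fD e g) (fD f g) := by
  have nfg : f ≠ g := by rintro rfl; exact h12 rfl
  have neg : e ≠ g := by rintro rfl; rw [fD_comm] at h13; exact h13 rfl
  have nef : e ≠ f := by rintro rfl; exact h23 rfl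
  have d1 := h1.2.2.resolve_left nef a
  have d2 := h2.2.2.resolve_left neg a
  have d3 := h3.2.2.resolve_left nfg a
  by_cases c1 : a ∈ e
  · right; right; left
    apply bd_small e h1.1
    rintro A (⟨x, y⟩ | ⟨x, y⟩)
    · have := BD x y; tauto
    · have a1 := D_edges x
      have a2 := D_edges y
      grind
  by_cases c2 : a ∈ f
  · right; left
    apply bd_small f h3.1
    rintro A (⟨x, y⟩ | ⟨x, y⟩)
    · have := BD x y; tauto
    · have a1 := D_edges x
      have a2 := D_edges y
      grind
  · left
    apply bd_small g h3.2.1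
    rintro A (⟨x, y⟩ | ⟨x, y⟩)
    · have := BD x y; tauto
    · have a1 := D_edges x
      have a2 := D_edges y
      grind

lemma share {e f e' f' : Finset α} (h : ¬ ∀ A ∈ fD e f ∩ fD e' f', 3 ≤ A.card) :
    e = e' ∨ e = f' ∨ f = e' ∨ f = f' := by
  push Not at h
  obtain ⟨A, hA, h3⟩ := h
  have a1 := D_edges hA.1
  have a2 := D_edges hA.2
  grind

/-- the first two share the first edge -/
lemma rad1s {a : α} {e f g u v : Finset α} (h1 : okD e f) (h2 : okD e g) (h3 : okD u v)
    (h12 : fD e f ≠ fD e g) (h13 : fD e f ≠ fD u v) (h23 : fD e g ≠ fD u v) :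
    Rad (fB a) (fD e f) (fD e g) (fD u v) := by
  by_cases c1 : u = e
  · subst c1; exact rad1e h1 h2 h3 h12 h13 h23
  by_cases c2 : v = e
  · subst c2
    rw [fD_comm u v] at *
    exact rad1e h1 h2 (okD_comm h3) h12 h13 h23
  by_cases s1 : ∀ A ∈ fD e f ∩ fD u v, 3 ≤ A.card
  · right; left; exact rad1a h2 s1
  by_cases s2 : ∀ A ∈ fD e g ∩ fD u v, 3 ≤ A.card
  · left; exact rad1a h1 s2
  have t1 := share s1
  have t2 := share s2
  have nfg : f ≠ g := by rintro rfl; exact h12 rfl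
  have : (u = f ∧ v = g) ∨ (u = g ∧ v = f) := by grind
  rcases this with ⟨rfl, rfl⟩ | ⟨rfl, rfl⟩
  · exact rad1t h1 h2 h3 h12 h13 h23
  · rw [fD_comm u v] at *
    exact rad1t h1 h2 (okD_comm h3) h12 h13 h23

lemma rad1 {a : α} {e f e' f' u v : Finset α} (h1 : okD e f) (h2 : okD e' f') (h3 : okD u v)
    (h12 : fD e f ≠ fD e' f') (h13 : fD e f ≠ fD u v) (h23 : fD e' f' ≠ fD u v) :
    Rad (fB a) (fD e f) (fD e' f') (fD u v) := by
  by_cases s1 : ∀ A ∈ fD e f ∩ fD e' f', 3 ≤ A.card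
  · right; right; left; exact rad1a h3 s1
  rcases share s1 with rfl | rfl | rfl | rfl
  · exact rad1s h1 h2 h3 h12 h13 h23
  · rw [fD_comm e' e] at *
    exact rad1s h1 (okD_comm h2) h3 h12 h13 h23
  · rw [fD_comm e f] at *
    exact rad1s (okD_comm h1) h2 h3 h12 h13 h23
  · rw [fD_comm e f, fD_comm e' f] at *
    exact rad1s (okD_comm h1) (okD_comm h2) h3 h12 h13 h23

/-! ### no base points -/

def isD (F : Set (Finset α)) : Prop := ∃ e f, okD e f ∧ F = fD e f

lemma isD.two {F : Set (Finset α)} (h : isD F) {x y z : Finset α} (hx : x ∈ F) (hy : y ∈ F)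
    (hz : z ∈ F) (cx : x.card = 2) (cy : y.card = 2) (cz : z.card = 2) :
    x = y ∨ x = z ∨ y = z := by
  obtain ⟨e, f, h, rfl⟩ := h
  have := D_edges hx
  have := D_edges hy
  have := D_edges hz
  grind

lemma isD.inter {F G : Set (Finset α)} (h : isD F) (h' : isD G) (hne : F ≠ G) :
    ∃ g : Finset α, g.card = 2 ∧ ∀ A ∈ F ∩ G, 3 ≤ A.card ∨ A = g := by
  obtain ⟨e, f, h, rfl⟩ := h
  obtain ⟨e', f', h', rfl⟩ := h'
  exact DD1 h h' hne

lemma rad0a {F G H K : Set (Finset α)} {g h : Finset α} (cg : g.card = 2) (ch : h.card = 2)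
    (hg : ∀ A ∈ F ∩ G, 3 ≤ A.card ∨ A = g) (hh : ∀ A ∈ H ∩ K, 3 ≤ A.card ∨ A = h)
    (hb : ¬ Bd (F ∩ G ∪ H ∩ K)) : g ≠ h ∧ g ∈ F ∩ G ∧ h ∈ H ∩ K := by
  refine ⟨?_, ?_, ?_⟩
  · rintro rfl
    apply hb
    apply bd_small g cg
    rintro A (x | x)
    · exact hg A x
    · exact hh A x
  · by_contra hn
    apply hb
    apply bd_small h ch
    rintro A (x | x)
    · rcases hg A x with h | rfl
      · exact Or.inl h
      · exact absurd x hn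
    · exact hh A x
  · by_contra hn
    apply hb
    apply bd_small g cg
    rintro A (x | x)
    · exact hg A x
    · rcases hh A x with h | rfl
      · exact Or.inl h
      · exact absurd x hn

lemma rad0 {F1 F2 F3 F4 : Set (Finset α)} (h1 : isD F1) (h2 : isD F2) (h3 : isD F3) (h4 : isD F4)
    (n12 : F1 ≠ F2) (n13 : F1 ≠ F3) (n14 : F1 ≠ F4) (n23 : F2 ≠ F3) (n24 : F2 ≠ F4)
    (n34 : F3 ≠ F4) : Rad F1 F2 F3 F4 := by
  obtain ⟨g12, c12, i12⟩ := h1.inter h2 n12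
  obtain ⟨g13, c13, i13⟩ := h1.inter h3 n13
  obtain ⟨g14, c14, i14⟩ := h1.inter h4 n14
  obtain ⟨g23, c23, i23⟩ := h2.inter h3 n23
  obtain ⟨g24, c24, i24⟩ := h2.inter h4 n24
  obtain ⟨g34, c34, i34⟩ := h3.inter h4 n34
  by_contra hR
  simp only [Rad, not_or] at hR
  obtain ⟨r1, r2, r3, -⟩ := hR
  obtain ⟨d1, ⟨m1, m2⟩, ⟨m3, m4⟩⟩ := rad0a c12 c34 i12 i34 r1
  obtain ⟨d2, ⟨m5, m6⟩, ⟨m7, m8⟩⟩ := rad0a c13 c24 i13 i24 r2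
  obtain ⟨d3, ⟨m9, m10⟩, ⟨m11, m12⟩⟩ := rad0a c14 c23 i14 i23 r3
  have u : ∀ {F G : Set (Finset α)} {g : Finset α}, (∀ A ∈ F ∩ G, 3 ≤ A.card ∨ A = g) →
      ∀ A, A.card = 2 → A ∈ F → A ∈ G → A = g := by
    intro F G g h A hc x y
    rcases h A ⟨x, y⟩ with h | h
    · omega
    · exact h
  have u12 := u i12
  have u13 := u i13
  have u14 := u i14
  have u23 := u i23
  have u24 := u i24
  have u34 := u i34
  have t1 := h1.two m1 m5 m9 c12 c13 c14
  have t2 := h2.two m2 m11 m7 c12 c23 c24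
  have t3 := h3.two m6 m12 m3 c13 c23 c34
  have t4 := h4.two m10 m8 m4 c14 c24 c34
  clear i12 i13 i14 i23 i24 i34 u h1 h2 h3 h4 n12 n13 n14 n23 n24 n34 r1 r2 r3
  grind

lemma rad {F1 F2 F3 F4 : Set (Finset α)} (h1 : IsPt F1) (h2 : IsPt F2) (h3 : IsPt F3)
    (h4 : IsPt F4)
    (n12 : F1 ≠ F2) (n13 : F1 ≠ F3) (n14 : F1 ≠ F4) (n23 : F2 ≠ F3) (n24 : F2 ≠ F4)
    (n34 : F3 ≠ F4) : Rad F1 F2 F3 F4 := by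
  have nB : ∀ {a b : α}, fB a ≠ fB b → a ≠ b := by rintro a b h rfl; exact h rfl
  rcases h1 with ⟨a, rfl⟩ | ⟨e1, f1, k1, rfl⟩ <;> rcases h2 with ⟨b, rfl⟩ | ⟨e2, f2, k2, rfl⟩ <;>
  rcases h3 with ⟨c, rfl⟩ | ⟨e3, f3, k3, rfl⟩ <;> rcases h4 with ⟨d, rfl⟩ | ⟨e4, f4, k4, rfl⟩
  · exact rad4 (nB n12) (nB n13) (nB n14) (nB n23) (nB n24) (nB n34)
  · exact rad3 (nB n12) (nB n13) (nB n23) k4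
  · exact (rad3 (nB n12) (nB n14) (nB n24) k3).s34
  · exact rad2 (nB n12) k3 k4
  · exact (rad3 (nB n13) (nB n14) (nB n34) k2).s34.s23
  · exact (rad2 (nB n13) k2 k4).s23
  · exact (rad2 (nB n14) k2 k3).s23.s34
  · exact rad1 k2 k3 k4 n23 n24 n34
  · exact (rad3 (nB n23) (nB n24) (nB n34) k1).s34.s23.s12
  · exact (rad2 (nB n23) k1 k4).s23.s12
  · exact (rad2 (nB n24) k1 k3).s23.s12.s34
  · exact (rad1 k1 k3 k4 n13 n14 n34).s12
  · exact (rad2 (nB n34) k1 k2).s23.s12.s34.s23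
  · exact (rad1 k1 k2 k4 n12 n14 n24).s12.s23
  · exact (rad1 k1 k2 k3 n12 n13 n23).s12.s23.s34
  · exact rad0 ⟨_, _, k1, rfl⟩ ⟨_, _, k2, rfl⟩ ⟨_, _, k3, rfl⟩ ⟨_, _, k4, rfl⟩
      n12 n13 n14 n23 n24 n34

end

/-! ### no `k` disjoint members -/

lemma sum_le {k n : ℕ} (P : Fin k → Finset (Fin n))
    (hd : ∀ i j, i ≠ j → Disjoint (P i) (P j)) : ∑ i, (P i).card ≤ n := by
  rw [← Finset.card_biUnion (fun i _ j _ h => hd i j h)]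
  simpa using Finset.card_le_univ (Finset.univ.biUnion P)

lemma no_disj {k : ℕ} (hk : 3 ≤ k) (F : Set (Finset (Fin (3 * k - 2)))) (hF : IsPt F)
    (P : Fin k → Finset (Fin (3 * k - 2)))
    (hd : ∀ i j, i ≠ j → Disjoint (P i) (P j)) (hP : ∀ i, P i ∈ F) : False := by
  have hs := sum_le P hd
  rcases hF with ⟨p, rfl⟩ | ⟨e, f, ⟨he, hf, hef⟩, rfl⟩
  · -- base
    by_cases h : ∃ i, p ∈ P i
    · obtain ⟨i, hi⟩ := h
      have h4 : ∀ j ∈ Finset.univ.erase i, 4 ≤ (P j).card := by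
        intro j hj
        have hij : j ≠ i := Finset.ne_of_mem_erase hj
        rcases hP j with h | h
        · exact absurd hi (Finset.disjoint_left.1 (hd j i hij) h)
        · exact h
      have := Finset.card_nsmul_le_sum _ _ 4 h4
      rw [← Finset.add_sum_erase _ _ (Finset.mem_univ i)] at hs
      have hc : (Finset.univ.erase i).card = k - 1 := by simp
      rw [hc] at this
      simp only [smul_eq_mul] at this
      have : 1 ≤ (P i).card := Finset.card_pos.2 ⟨p, hi⟩
      omega
    · have h4 : ∀ j ∈ (Finset.univ : Finset (Fin k)), 4 ≤ (P j).card := by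
        intro j _
        rcases hP j with h' | h'
        · exact absurd ⟨j, h'⟩ h
        · exact h'
      have := Finset.card_nsmul_le_sum _ _ 4 h4
      simp at this
      omega
  · have uniq : ∀ i j, P i = P j → (P i).card = 2 → i = j := by
      intro i j h h2
      by_contra hne
      have := hd i j hne
      rw [← h, disjoint_self] at this
      simp [this] at h2
    have hE := fun i => D_edges (hP i)
    by_cases c : ∃ i j, i ≠ j ∧ P i = e ∧ P j = f
    · obtain ⟨i, j, hij, hi, hj⟩ := c
      have h4 : ∀ l ∈ (Finset.univ.erase i).erase j, 4 ≤ (P l).card := by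
        intro l hl
        have hlj : l ≠ j := Finset.ne_of_mem_erase hl
        have hli : l ≠ i := Finset.ne_of_mem_erase (Finset.mem_of_mem_erase hl)
        rcases hP l with h | h | h | ⟨h, h' | ⟨x, hx, hx'⟩⟩
        · exact h
        · exact absurd (uniq l i (h.trans hi.symm) (by rw [h, he])) hli
        · exact absurd (uniq l j (h.trans hj.symm) (by rw [h, hf])) hlj
        · exact absurd (uniq i j (by rw [hi, hj, h']) (by rw [hi, he])) hij
        · rcases hx' with hx' | hx'
          · rw [← hi] at hx'
            exact absurd hx' (Finset.disjoint_left.1 (hd l i hli) hx)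
          · rw [← hj] at hx'
            exact absurd hx' (Finset.disjoint_left.1 (hd l j hlj) hx)
      have := Finset.card_nsmul_le_sum _ _ 4 h4
      have hji : j ∈ Finset.univ.erase i := by simp [hij.symm]
      rw [← Finset.add_sum_erase _ _ (Finset.mem_univ i), ← Finset.add_sum_erase _ _ hji] at hs
      have hc : ((Finset.univ.erase i).erase j).card = k - 2 := by
        rw [Finset.card_erase_of_mem hji]; simp; omega
      rw [hc] at this
      simp only [smul_eq_mul] at this
      rw [hi, hj, he, hf] at hs
      omega
    · -- at most one edge
      have : ∃ i, ∀ j, j ≠ i → 3 ≤ (P j).card := by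
        by_cases c1 : ∃ i, (P i).card < 3
        · obtain ⟨i, hi⟩ := c1
          refine ⟨i, fun j hj => ?_⟩
          by_contra hj3
          have a1 := (hE i).resolve_left (by omega)
          have a2 := (hE j).resolve_left hj3
          rcases a1 with a1 | a1 <;> rcases a2 with a2 | a2
          · exact hj (uniq j i (a2.trans a1.symm) (by rw [a2, he]))
          · exact c ⟨i, j, hj.symm, a1, a2⟩
          · exact c ⟨j, i, hj, a2, a1⟩
          · exact hj (uniq j i (a2.trans a1.symm) (by rw [a2, hf]))
        · push Not at c1
          exact ⟨⟨0, by omega⟩, fun j _ => c1 j⟩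
      obtain ⟨i, hi⟩ := this
      have := Finset.card_nsmul_le_sum (Finset.univ.erase i) (fun j => (P j).card) 3
        (fun j hj => hi j (Finset.ne_of_mem_erase hj))
      rw [← Finset.add_sum_erase _ _ (Finset.mem_univ i)] at hs
      have hc : (Finset.univ.erase i).card = k - 1 := by simp
      rw [hc] at this
      simp only [smul_eq_mul] at this
      have : 2 ≤ (P i).card := by
        rcases hE i with h | h | h
        · omega
        · rw [h, he]
        · rw [h, hf]
      omega

/-! ### the convexity -/

abbrev Pt (α : Type) : Type := {F : Set (Finset α) // IsPt F}

def CC (α : Type) : Set (Set (Pt α)) :=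
  {K | K = ∅ ∨ ∃ 𝒢 : Set (Finset α), K = {x | 𝒢 ⊆ x.1}}

lemma CC_conv (α : Type) [Finite α] : IsConvexitySpace (CC α) := by
  refine ⟨Or.inl rfl, Or.inr ⟨∅, by simp⟩, ?_, ?_⟩
  · intro D hD hne
    by_cases h : ∅ ∈ D
    · left
      exact Set.subset_empty_iff.1 (Set.sInter_subset_of_mem h)
    · right
      refine ⟨⋃₀ {𝒢 | {x : Pt α | 𝒢 ⊆ x.1} ∈ D}, ?_⟩
      ext x
      simp only [Set.mem_sInter, Set.mem_ofPred_eq, Set.sUnion_subset_iff]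
      constructor
      · intro hx 𝒢 h𝒢
        exact hx _ h𝒢
      · intro hx K hK
        rcases hD hK with rfl | ⟨𝒢, rfl⟩
        · exact absurd hK h
        · exact hx 𝒢 hK
  · intro D hD hne hch
    have hfin : D.Finite := Set.toFinite D
    obtain ⟨M, hM⟩ := hfin.exists_maximal hne
    have : ⋃₀ D = M := by
      apply Set.Subset.antisymm
      · apply Set.sUnion_subset
        intro K hK
        rcases hch.total hK hM.1 with h | h
        · exact h
        · exact hM.2 hK h
      · exact Set.subset_sUnion_of_mem hM.1
    rw [this]
    exact hD hM.1

lemma mem_hull {α : Type} {S : Set (Pt α)} (hS : S.Nonempty) {y : Pt α}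
    (h : ∀ A, (∀ x ∈ S, A ∈ x.1) → A ∈ y.1) : y ∈ convHull (CC α) S := by
  rintro K ⟨hK, hSK⟩
  rcases hK with rfl | ⟨𝒢, rfl⟩
  · obtain ⟨x, hx⟩ := hS
    exact (hSK hx).elim
  · intro A hA
    exact h A (fun x hx => hSK hx hA)

lemma hull_mem {α : Type} {S : Set (Pt α)} {y : Pt α} (hy : y ∈ convHull (CC α) S)
    {A : Finset α} (hA : ∀ x ∈ S, A ∈ x.1) : A ∈ y.1 := by
  have := hy {x | ({A} : Set (Finset α)) ⊆ x.1}
    ⟨Or.inr ⟨{A}, rfl⟩, fun x hx => by simpa using hA x hx⟩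
  simpa using this

lemma hull_empty {α : Type} {y : Pt α} (hy : y ∈ convHull (CC α) ∅) : False :=
  hy ∅ ⟨Or.inl rfl, le_refl _⟩

def bp {α : Type} (p : α) : Pt α := ⟨fB p, Or.inl ⟨p, rfl⟩⟩

lemma bp_inj {α : Type} : Function.Injective (bp : α → Pt α) := by
  intro p q h
  have h' : fB p = fB q := congrArg Subtype.val h
  have : ({p} : Finset α) ∈ fB q := by
    rw [← h']; left; simp
  rcases this with h | h
  · exact (Finset.mem_singleton.1 h).symm
  · simp at h

lemma radon4 {α : Type} (Y : Finset (Pt α)) (hY : Y.card = 4) : HasRadonPartition (CC α) Y := by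
  obtain ⟨a, b, c, d, hab, hac, had, hbc, hbd, hcd, rfl⟩ := Finset.card_eq_four.1 hY
  have ne : ∀ {x y : Pt α}, x ≠ y → x.1 ≠ y.1 := fun h h' => h (Subtype.ext h')
  have two : ∀ x y z w : Pt α, Bd (x.1 ∩ y.1 ∪ z.1 ∩ w.1) →
      (convHull (CC α) ((({x, y} : Finset (Pt α))) : Set (Pt α)) ∩
        convHull (CC α) ((({z, w} : Finset (Pt α))) : Set (Pt α))).Nonempty := by
    rintro x y z w ⟨G, hG, hs⟩
    refine ⟨⟨G, hG⟩, mem_hull ⟨x, by simp⟩ ?_, mem_hull ⟨z, by simp⟩ ?_⟩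
    · intro A hA
      exact hs (Or.inl ⟨hA x (by simp), hA y (by simp)⟩)
    · intro A hA
      exact hs (Or.inr ⟨hA z (by simp), hA w (by simp)⟩)
  have three : ∀ x y z w : Pt α, x.1 ∩ y.1 ∩ z.1 ⊆ w.1 →
      (convHull (CC α) ((({x, y, z} : Finset (Pt α))) : Set (Pt α)) ∩
        convHull (CC α) ((({w} : Finset (Pt α))) : Set (Pt α))).Nonempty := by
    intro x y z w hs
    refine ⟨w, mem_hull ⟨x, by simp⟩ ?_, mem_hull ⟨w, by simp⟩ ?_⟩
    · intro A hA
      exact hs ⟨⟨hA x (by simp), hA y (by simp)⟩, hA z (by simp)⟩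
    · intro A hA
      exact hA w (by simp)
  rcases rad a.2 b.2 c.2 d.2 (ne hab) (ne hac) (ne had) (ne hbc) (ne hbd) (ne hcd) with
    h | h | h | h | h | h | h
  · refine ⟨_, _, ?_, ?_, two _ _ _ _ h⟩
    · ext x; simp <;> tauto
    · rw [Finset.disjoint_coe, Finset.disjoint_left]; intro x; simp; grind
  · refine ⟨_, _, ?_, ?_, two _ _ _ _ h⟩
    · ext x; simp <;> tauto
    · rw [Finset.disjoint_coe, Finset.disjoint_left]; intro x; simp; grind
  · refine ⟨_, _, ?_, ?_, two _ _ _ _ h⟩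
    · ext x; simp <;> tauto
    · rw [Finset.disjoint_coe, Finset.disjoint_left]; intro x; simp; grind
  · refine ⟨_, _, ?_, ?_, three _ _ _ _ h⟩
    · ext x; simp <;> tauto
    · rw [Finset.disjoint_coe, Finset.disjoint_left]; intro x; simp; grind
  · refine ⟨_, _, ?_, ?_, three _ _ _ _ h⟩
    · ext x; simp <;> tauto
    · rw [Finset.disjoint_coe, Finset.disjoint_left]; intro x; simp; grind
  · refine ⟨_, _, ?_, ?_, three _ _ _ _ h⟩
    · ext x; simp <;> tauto
    · rw [Finset.disjoint_coe, Finset.disjoint_left]; intro x; simp; grind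
  · refine ⟨_, _, ?_, ?_, three _ _ _ _ h⟩
    · ext x; simp <;> tauto
    · rw [Finset.disjoint_coe, Finset.disjoint_left]; intro x; simp; grind

/-- the set of indices of base points in a finite set of points -/
noncomputable def idx {α : Type} [Fintype α] (S : Finset (Pt α)) : Finset α :=
  Finset.univ.filter (fun p => bp p ∈ S)

lemma idx_mem {α : Type} [Fintype α] {S : Finset (Pt α)} {y : Pt α}
    (hS : ∀ x ∈ S, ∃ p, x = bp p) (hy : y ∈ convHull (CC α) (S : Set (Pt α))) : idx S ∈ y.1 := by
  apply hull_mem hy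
  intro x hx
  obtain ⟨p, rfl⟩ := hS x hx
  left
  simpa [idx] using hx

lemma idx_disj {α : Type} [Fintype α] {S T : Finset (Pt α)}
    (h : Disjoint (S : Set (Pt α)) (T : Set (Pt α))) : Disjoint (idx S) (idx T) := by
  rw [Finset.disjoint_coe] at h
  rw [Finset.disjoint_left]
  intro p hp hq
  simp only [idx, Finset.mem_filter, Finset.mem_univ, true_and] at hp hq
  exact Finset.disjoint_left.1 h hp hq

lemma tv {k : ℕ} (hk : 3 ≤ k) :
    ¬ HasTverbergPartition (CC (Fin (3 * k - 2))) k (Finset.univ.image bp) := by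
  rintro ⟨P, hU, hd, y, hy⟩
  rw [Set.mem_iInter] at hy
  refine no_disj hk y.1 y.2 (fun i => idx (P i)) (fun i j h => idx_disj (hd i j h)) (fun i => ?_)
  refine idx_mem ?_ (hy i)
  intro x hx
  have : x ∈ (⋃ i, (↑(P i) : Set _)) := Set.mem_iUnion.2 ⟨i, hx⟩
  rw [hU] at this
  simp only [Finset.coe_image, Finset.coe_univ, Set.image_univ, Set.mem_range] at this
  obtain ⟨p, rfl⟩ := this
  exact ⟨p, rfl⟩

/-- a set of fewer than four base points, split in two disjoint nonempty sets -/
lemma pt_small {α : Type} {y : Pt α} {A B : Finset α} (hA : A ∈ y.1) (hB : B ∈ y.1)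
    (hd : Disjoint A B) (hc : A.card + B.card ≤ 3) (hA1 : 1 ≤ A.card) (hB1 : 1 ≤ B.card) :
    False := by
  obtain ⟨y, hy⟩ := y
  change A ∈ y at hA
  change B ∈ y at hB
  rcases hy with ⟨p, rfl⟩ | ⟨e, f, ⟨he, hf, -⟩, rfl⟩
  · rcases hA with hA | hA
    · rcases hB with hB | hB
      · exact Finset.disjoint_left.1 hd hA hB
      · omega
    · omega
  · have a1 := D_edges hA
    have a2 := D_edges hB
    have : 2 ≤ A.card := by
      rcases a1 with h | h | h
      · omega
      · rw [h, he]
      · rw [h, hf]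
    have : 2 ≤ B.card := by
      rcases a2 with h | h | h
      · omega
      · rw [h, he]
      · rw [h, hf]
    omega

lemma no_radon3 {α : Type} [Fintype α] (T : Finset α) (hT : T.card = 3) :
    ¬ HasRadonPartition (CC α) (T.image bp) := by
  rintro ⟨A, B, hU, hd, y, hyA, hyB⟩
  have hsub : ∀ x, x ∈ A ∨ x ∈ B → ∃ p ∈ T, x = bp p := by
    intro x hx
    have : x ∈ ((A : Set (Pt α)) ∪ (B : Set (Pt α))) := hx
    rw [hU] at this
    simp only [Finset.coe_image, Set.mem_image, Finset.mem_coe] at this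
    obtain ⟨p, hp, rfl⟩ := this
    exact ⟨p, hp, rfl⟩
  have iA := idx_mem (fun x hx => by obtain ⟨p, -, h⟩ := hsub x (Or.inl hx); exact ⟨p, h⟩) hyA
  have iB := idx_mem (fun x hx => by obtain ⟨p, -, h⟩ := hsub x (Or.inr hx); exact ⟨p, h⟩) hyB
  have dd := idx_disj hd
  have ne : ∀ S : Finset (Pt α), (∀ x ∈ S, x ∈ A ∨ x ∈ B) →
      y ∈ convHull (CC α) (S : Set (Pt α)) → 1 ≤ (idx S).card := by
    intro S hS hy
    rcases S.eq_empty_or_nonempty with rfl | ⟨x, hx⟩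
    · rw [Finset.coe_empty] at hy
      exact (hull_empty hy).elim
    · obtain ⟨p, -, rfl⟩ := hsub x (hS x hx)
      exact Finset.card_pos.2 ⟨p, by simpa [idx] using hx⟩
  refine pt_small iA iB dd ?_ (ne A (fun x h => Or.inl h) hyA) (ne B (fun x h => Or.inr h) hyB)
  rw [← Finset.card_union_of_disjoint dd, ← hT]
  apply Finset.card_le_card
  intro p hp
  simp only [idx, Finset.mem_union, Finset.mem_filter, Finset.mem_univ, true_and] at hp
  obtain ⟨q, hq, h⟩ := hsub _ hp
  rw [bp_inj h]
  exact hq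

end Bukh

/-- (Bukh) For every `k ≥ 3` there is a convexity space with Radon number `4`
and `k`-th Tverberg number at least `3k - 1`. -/
theorem bukh_partition_counterexample (k : ℕ) (hk : 3 ≤ k) :
    ∃ (X : Type) (C : Set (Set X)), IsConvexitySpace C ∧
      (∀ Y : Finset X, Y.card = 4 → HasRadonPartition C Y) ∧
      (∃ Y : Finset X, Y.card = 3 ∧ ¬ HasRadonPartition C Y) ∧
      (∃ Y : Finset X, Y.card = 3 * k - 2 ∧ ¬ HasTverbergPartition C k Y) := by
  refine ⟨Bukh.Pt (Fin (3 * k - 2)), Bukh.CC _, Bukh.CC_conv _, Bukh.radon4, ?_, ?_⟩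
  · obtain ⟨T, -, hT⟩ := Finset.exists_subset_card_eq
      (s := (Finset.univ : Finset (Fin (3 * k - 2)))) (n := 3) (by simp; omega)
    exact ⟨T.image Bukh.bp, by rw [Finset.card_image_of_injective _ Bukh.bp_inj, hT],
      Bukh.no_radon3 T hT⟩
  · exact ⟨Finset.univ.image Bukh.bp,
      by rw [Finset.card_image_of_injective _ Bukh.bp_inj]; simp, Bukh.tv hk⟩
end

section
/- There exists a function c : ℕ → ℕ such that for every convexity space (X, C) with Radon number r(X, C) ≤ r and every integer k ≥ 2, the k-th Tverberg number satisfies t_k(X, C) ≤ c(r) · k; that is, every subset of X of size at least c(r) · k admits a Tverberg k-partition. -/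
open scoped Classical

universe u

section CombProof

lemma card_cons_w {V : Type u} [Fintype V] (j : ℕ) (E : (Fin (j+1) → V) → Prop)
    [DecidablePred E] :
    (Finset.univ.filter E).card
      = ∑ w : Fin j → V, (Finset.univ.filter fun y => E (Fin.cons y w)).card := by
  simp only [Finset.card_filter]
  rw [← (Fin.consEquiv (fun _ : Fin (j+1) => V)).sum_comp, Fintype.sum_prod_type_right]
  rfl

lemma card_cons_y {V : Type u} [Fintype V] (j : ℕ) (E : (Fin (j+1) → V) → Prop)
    [DecidablePred E] :
    (Finset.univ.filter E).card
      = ∑ y : V, (Finset.univ.filter fun w : Fin j → V => E (Fin.cons y w)).card := by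
  simp only [Finset.card_filter]
  rw [← (Fin.consEquiv (fun _ : Fin (j+1) => V)).sum_comp, Fintype.sum_prod_type]
  rfl

lemma extend_miss {V : Type u} {h j : ℕ} {Miss : (Fin h → V) → Prop}
    {E : (Fin (j+1) → V) → Prop} (e0 : Fin h → V) (h0 : Miss e0)
    (H : ∃ e : Fin j → Fin h → V, (∀ i, Miss (e i)) ∧
      ∀ σ : Fin j → Fin h, ∀ i, E (Fin.cons (e0 i) (fun i => e i (σ i)))) :
    ∃ e : Fin (j+1) → Fin h → V, (∀ i, Miss (e i)) ∧
      ∀ σ : Fin (j+1) → Fin h, E (fun i => e i (σ i)) := by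
  obtain ⟨e, he, hE⟩ := H
  refine ⟨Fin.cons e0 e, ?_, ?_⟩
  · intro i
    refine Fin.cases ?_ ?_ i
    · simpa using h0
    · intro i; simpa using he i
  · intro σ
    have := hE (fun i => σ i.succ) (σ 0)
    convert this using 1
    funext i
    refine Fin.cases ?_ ?_ i <;> simp

lemma good_many {ι : Type u} [Fintype ι] (a : ι → ℕ) (n : ℕ) (hn : 0 < n) (α : ℝ)
    (ha : ∀ i, a i ≤ n) (hs : α * n * Fintype.card ι ≤ ∑ i, (a i : ℝ)) :
    α / 2 * Fintype.card ι ≤ (Finset.univ.filter fun i => α / 2 * n ≤ a i).card := by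
  have hn' : (0:ℝ) < n := by exact_mod_cast hn
  by_cases hα : α < 0
  · refine le_trans ?_ (Nat.cast_nonneg _)
    have : (0:ℝ) ≤ Fintype.card ι := Nat.cast_nonneg _
    nlinarith
  push Not at hα
  have h1 : ∑ i, (a i : ℝ) ≤ ∑ i, ((if α / 2 * n ≤ a i then (n:ℝ) else 0) + α / 2 * n) := by
    apply Finset.sum_le_sum
    intro i _
    have : (a i : ℝ) ≤ n := by exact_mod_cast ha i
    split_ifs with hh
    · have : 0 ≤ α / 2 * n := by positivity
      linarith
    · linarith
  rw [Finset.sum_add_distrib, ← Finset.sum_filter] at h1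
  simp only [Finset.sum_const, nsmul_eq_mul, Finset.card_univ] at h1
  have h2 : α / 2 * Fintype.card ι * n
      ≤ (Finset.univ.filter fun i => α / 2 * n ≤ a i).card * n := by nlinarith
  exact le_of_mul_le_mul_right h2 hn'

lemma stepA (m h : ℕ) (ε : ℝ) (hε : 0 < ε) : ∀ j : ℕ, ∀ α : ℝ, 0 < α → ∃ γ : ℝ, 0 < γ ∧
    ∀ (V : Type u) [Fintype V] [Nonempty V] (Miss : (Fin h → V) → Prop)
      (Bad : (Fin m → V) → Prop),
      (∀ u, Bad u → ∃ σ : Fin h → Fin m, Miss (u ∘ σ)) →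
      (∀ W : Finset V, γ * Fintype.card V ≤ W.card →
        ε * (W.card : ℝ) ^ m ≤
          (Finset.univ.filter fun u : Fin m → V => Bad u ∧ ∀ i, u i ∈ W).card) →
      ∀ E : (Fin j → V) → Prop,
        α * (Fintype.card V : ℝ) ^ j ≤ (Finset.univ.filter E).card →
        ∃ e : Fin j → Fin h → V, (∀ i, Miss (e i)) ∧
          ∀ σ : Fin j → Fin h, E (fun i => e i (σ i)) := by
  intro j
  induction j with
  | zero =>
    intro α hα
    refine ⟨1, one_pos, ?_⟩
    intro V _ _ Miss Bad _ _ E hE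
    have : 0 < (Finset.univ.filter E).card := by
      have : (0:ℝ) < (Finset.univ.filter E).card := by
        simp only [pow_zero, mul_one] at hE
        linarith
      exact_mod_cast this
    obtain ⟨w, hw⟩ := Finset.card_pos.1 this
    refine ⟨fun i => i.elim0, fun i => i.elim0, fun σ => ?_⟩
    rw [Subsingleton.elim (fun i => _) w]
    exact (Finset.mem_filter.1 hw).2
  | succ j ih =>
    intro α hα
    obtain ⟨γ, hγ, ih⟩ := ih (ε * (α/2)^(m+1)) (by positivity)
    refine ⟨min (α/2) γ, lt_min (by positivity) hγ, ?_⟩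
    intro V _ _ Miss Bad hBad hW E hE
    have hnpos : 0 < Fintype.card V := Fintype.card_pos
    set n := Fintype.card V with hn
    have hnpos' : (0:ℝ) < n := by exact_mod_cast hnpos
    have hcard : Fintype.card (Fin j → V) = n ^ j := by simp [hn]
    let N : (Fin j → V) → Finset V := fun w => Finset.univ.filter fun y => E (Fin.cons y w)
    have hG := good_many (fun w => (N w).card) n hnpos α (fun w => Finset.card_le_univ _) (by
      rw [hcard, card_cons_w] at *
      push_cast at hE ⊢
      rw [pow_succ] at hE
      linarith)
    rw [hcard] at hG
    push_cast at hG
    -- double counting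
    let R : (Fin m → V) → (Fin j → V) → Prop := fun u w => Bad u ∧ ∀ i, u i ∈ N w
    have hdc : ∑ u : Fin m → V, (Finset.univ.filter fun w => R u w).card
        = ∑ w : Fin j → V, (Finset.univ.filter fun u => R u w).card := by
      simp only [Finset.card_filter]
      exact Finset.sum_comm
    have hlow : (α/2 * (n:ℝ)^j) * (ε * (α/2 * n)^m)
        ≤ ∑ w : Fin j → V, ((Finset.univ.filter fun u => R u w).card : ℝ) := by
      calc _ ≤ ((Finset.univ.filter fun w => α / 2 * n ≤ ((N w).card : ℝ)).card : ℝ)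
            * (ε * (α/2 * n)^m) := by
              apply mul_le_mul_of_nonneg_right hG (by positivity)
        _ = ∑ w ∈ Finset.univ.filter fun w => α / 2 * n ≤ ((N w).card : ℝ),
              (ε * (α/2 * n)^m) := by simp
        _ ≤ ∑ w ∈ Finset.univ.filter fun w => α / 2 * n ≤ ((N w).card : ℝ),
              ((Finset.univ.filter fun u => R u w).card : ℝ) := by
              apply Finset.sum_le_sum
              intro w hw
              have hw := (Finset.mem_filter.1 hw).2
              refine le_trans ?_ (hW (N w) (le_trans ?_ hw))
              · gcongr
              · gcongr
                exact min_le_left _ _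
        _ ≤ _ := Finset.sum_le_sum_of_subset_of_nonneg (Finset.filter_subset _ _)
              (fun _ _ _ => Nat.cast_nonneg _)
    obtain ⟨u, hu⟩ : ∃ u : Fin m → V, ε * (α/2)^(m+1) * (n:ℝ)^j
        ≤ ((Finset.univ.filter fun w => R u w).card : ℝ) := by
      by_contra hcon
      push Not at hcon
      have h1 : ∑ u : Fin m → V, ((Finset.univ.filter fun w => R u w).card : ℝ)
          < ∑ u : Fin m → V, ε * (α/2)^(m+1) * (n:ℝ)^j :=
        Finset.sum_lt_sum_of_nonempty Finset.univ_nonempty (fun u _ => hcon u)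
      have h2 : ∑ u : Fin m → V, ((Finset.univ.filter fun w => R u w).card : ℝ)
        = ∑ w : Fin j → V, ((Finset.univ.filter fun u => R u w).card : ℝ) := by
        exact_mod_cast hdc
      rw [h2] at h1
      have h3 := lt_of_le_of_lt hlow h1
      simp only [Finset.sum_const, Finset.card_univ, Fintype.card_fun, Fintype.card_fin,
        nsmul_eq_mul] at h3
      rw [← hn] at h3
      push_cast at h3
      rw [mul_pow, pow_succ] at h3
      apply lt_irrefl _ (lt_of_eq_of_lt _ h3)
      ring
    have hpos : 0 < (Finset.univ.filter fun w => R u w).card := by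
      have : (0:ℝ) < (Finset.univ.filter fun w => R u w).card :=
        lt_of_lt_of_le (by positivity) hu
      exact_mod_cast this
    obtain ⟨w, hw⟩ := Finset.card_pos.1 hpos
    obtain ⟨σ, hσ⟩ := hBad u (Finset.mem_filter.1 hw).2.1
    refine extend_miss (u ∘ σ) hσ ?_
    obtain ⟨e, he, hE'⟩ := ih V Miss Bad hBad
      (fun W hWc => hW W (le_trans (by gcongr; exact min_le_right _ _) hWc))
      (fun w => R u w) (by convert hu)
    refine ⟨e, he, fun τ i => ?_⟩
    have := (hE' τ).2 (σ i)
    exact (Finset.mem_filter.1 this).2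

lemma stepB (h : ℕ) : ∀ j : ℕ, ∃ ε : ℝ, 0 < ε ∧
    ∀ (V : Type u) [Fintype V] [Nonempty V] (Miss : (Fin h → V) → Prop),
      (∀ S : Finset V, Fintype.card V ≤ 2 * S.card → ∃ e, Miss e ∧ ∀ i, e i ∈ S) →
      ∀ E : (Fin j → V) → Prop,
        ((Finset.univ.filter fun w => ¬ E w).card : ℝ) ≤ ε * (Fintype.card V : ℝ) ^ j →
        ∃ e : Fin j → Fin h → V, (∀ i, Miss (e i)) ∧
          ∀ σ : Fin j → Fin h, E (fun i => e i (σ i)) := by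
  intro j
  induction j with
  | zero =>
    refine ⟨1/2, by norm_num, ?_⟩
    intro V _ _ Miss _ E hE
    refine ⟨fun i => i.elim0, fun i => i.elim0, fun σ => ?_⟩
    by_contra hcon
    have : 1 ≤ (Finset.univ.filter fun w => ¬ E w).card :=
      Finset.card_pos.2 ⟨_, Finset.mem_filter.2 ⟨Finset.mem_univ _, hcon⟩⟩
    have : (1:ℝ) ≤ (Finset.univ.filter fun w => ¬ E w).card := by exact_mod_cast this
    simp only [pow_zero, mul_one] at hE
    linarith
  | succ j ih =>
    obtain ⟨ε, hε, ih⟩ := ih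
    refine ⟨ε / (2 * (h+1)), by positivity, ?_⟩
    intro V _ _ Miss hMiss E hE
    have hnpos : 0 < Fintype.card V := Fintype.card_pos
    set n := Fintype.card V with hn
    have hnpos' : (0:ℝ) < n := by exact_mod_cast hnpos
    let D : V → Finset (Fin j → V) := fun y => Finset.univ.filter fun w => ¬ E (Fin.cons y w)
    let S : Finset V := Finset.univ.filter fun y => ((D y).card : ℝ) ≤ ε / (h+1) * (n:ℝ)^j
    rw [card_cons_y] at hE
    push_cast at hE
    have hS : n ≤ 2 * S.card := by
      have h1 : ∑ y ∈ Sᶜ, (ε / (h+1) * (n:ℝ)^j) ≤ ∑ y ∈ Sᶜ, ((D y).card : ℝ) := by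
        apply Finset.sum_le_sum
        intro y hy
        simp only [S, Finset.compl_filter, Finset.mem_filter] at hy
        exact le_of_lt (not_le.1 hy.2)
      have h2 : ∑ y ∈ Sᶜ, ((D y).card : ℝ) ≤ ∑ y, ((D y).card : ℝ) :=
        Finset.sum_le_sum_of_subset_of_nonneg (Finset.subset_univ _)
              (fun _ _ _ => Nat.cast_nonneg _)
      have h3 := (h1.trans h2).trans hE
      simp only [Finset.sum_const, nsmul_eq_mul] at h3
      have hc : ((Sᶜ.card : ℕ) : ℝ) = n - S.card := by
        rw [Finset.card_compl, Nat.cast_sub (Finset.card_le_univ _)]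
      have hK : 0 < ε / (h+1) * (n:ℝ)^j := by positivity
      have h4 : ε / (2 * (h+1)) * (n:ℝ)^(j+1) = (n / 2) * (ε / (h+1) * (n:ℝ)^j) := by
        field_simp
        ring
      rw [h4, hc] at h3
      have h5 := le_of_mul_le_mul_right h3 hK
      have : (n:ℝ) ≤ 2 * S.card := by linarith
      exact_mod_cast this
    obtain ⟨e0, he0, heS⟩ := hMiss S hS
    refine extend_miss e0 he0 ?_
    obtain ⟨e, he, hE'⟩ := ih V Miss hMiss (fun w => ∀ i, E (Fin.cons (e0 i) w)) (by
      have h1 : (Finset.univ.filter fun w : Fin j → V => ¬ ∀ i, E (Fin.cons (e0 i) w))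
          ⊆ Finset.univ.biUnion fun i => D (e0 i) := by
        intro w hw
        simpa [D] using hw
      have h2 := (Finset.card_le_card h1).trans Finset.card_biUnion_le
      have h3 : ((Finset.univ.filter fun w : Fin j → V => ¬ ∀ i, E (Fin.cons (e0 i) w)).card : ℝ)
          ≤ ∑ i, ((D (e0 i)).card : ℝ) := by exact_mod_cast h2
      refine le_trans (le_of_eq (by congr!)) (h3.trans ?_)
      calc _ ≤ ∑ i : Fin h, ε / (h+1) * (n:ℝ)^j :=
            Finset.sum_le_sum fun i _ => (Finset.mem_filter.1 (heS i)).2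
        _ = (h / (h+1)) * (ε * (n:ℝ)^j) := by
            simp only [Finset.sum_const, Finset.card_univ, Fintype.card_fin, nsmul_eq_mul]
            ring
        _ ≤ 1 * (ε * (n:ℝ)^j) := by
            gcongr
            rw [div_le_one (by positivity)]
            linarith
        _ = _ := one_mul _)
    exact ⟨e, he, fun σ i => hE' σ i⟩

lemma frac (m h : ℕ) (α : ℝ) (hα : 0 < α) : ∃ β : ℝ, 0 < β ∧
    ∀ (V : Type u) [Fintype V] [Nonempty V] (Miss : (Fin h → V) → Prop)
      (Bad : (Fin m → V) → Prop),
      (∀ u, Bad u → ∃ σ : Fin h → Fin m, Miss (u ∘ σ)) →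
      (∀ e : Fin m → Fin h → V, (∀ i, Miss (e i)) → ∃ σ : Fin m → Fin h,
        Bad (fun i => e i (σ i))) →
      α * (Fintype.card V : ℝ) ^ m ≤ (Finset.univ.filter fun u => ¬ Bad u).card →
      ∃ S : Finset V, β * Fintype.card V ≤ S.card ∧ ∀ e, (∀ i, e i ∈ S) → ¬ Miss e := by
  obtain ⟨ε, hε, hB⟩ := stepB.{u} h m
  obtain ⟨γ, hγ, hA⟩ := stepA.{u} m h ε hε m α hα
  refine ⟨γ/2, by positivity, ?_⟩
  intro V _ _ Miss Bad hBad hCol hd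
  by_contra hcon
  push Not at hcon
  have hnpos : 0 < Fintype.card V := Fintype.card_pos
  have hnpos' : (0:ℝ) < Fintype.card V := by exact_mod_cast hnpos
  by_cases hW : ∀ W : Finset V, γ * Fintype.card V ≤ W.card →
        ε * (W.card : ℝ) ^ m ≤
          (Finset.univ.filter fun u : Fin m → V => Bad u ∧ ∀ i, u i ∈ W).card
  · obtain ⟨e, he, hE⟩ := hA V Miss Bad hBad hW (fun u => ¬ Bad u) (by convert hd)
    obtain ⟨σ, hσ⟩ := hCol e he
    exact hE σ hσ
  · push Not at hW
    obtain ⟨W, hWc, hWb⟩ := hW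
    have hWpos : (0:ℝ) < W.card := lt_of_lt_of_le (by positivity) hWc
    have hWne : W.Nonempty := Finset.card_pos.1 (by exact_mod_cast hWpos)
    have : Nonempty W := hWne.to_subtype
    obtain ⟨e, he, hE⟩ := hB W (fun e => Miss (fun i => (e i : V))) (by
      intro S hS
      have hS' : (W.card : ℝ) ≤ 2 * S.card := by
        rw [Fintype.card_coe] at hS
        exact_mod_cast hS
      obtain ⟨e, heS, he⟩ := hcon (S.map (Function.Embedding.subtype _)) (by
        rw [Finset.card_map]
        linarith)
      simp only [Finset.mem_map, Function.Embedding.coe_subtype] at heS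
      choose f hf1 hf2 using heS
      refine ⟨f, ?_, hf1⟩
      have : (fun i => (f i : V)) = e := funext hf2
      rw [this]; exact he)
      (fun u => ¬ Bad (fun i => (u i : V))) (by
        rw [Fintype.card_coe]
        refine le_trans ?_ hWb.le
        norm_cast
        refine Finset.card_le_card_of_injOn (fun u i => (u i : V)) ?_ ?_
        · intro u hu
          simpa using hu
        · intro u _ v _ huv
          funext i
          exact Subtype.ext (congrFun huv i))
    obtain ⟨σ, hσ⟩ := hCol (fun i k => (e i k : V)) he
    exact hE σ hσ

end CombProof

section TvProof

lemma hull_sub {X : Type*} {C : Set (Set X)} {Y K : Set X} (hK : K ∈ C) (h : Y ⊆ K) :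
    convHull C Y ⊆ K := fun _ hx => hx K ⟨hK, h⟩

lemma sub_hull {X : Type*} {C : Set (Set X)} {Y : Set X} : Y ⊆ convHull C Y :=
  fun _ hx _ hK => hK.2 hx

lemma hull_mono {X : Type*} {C : Set (Set X)} {Y Z : Set X} (h : Y ⊆ Z) :
    convHull C Y ⊆ convHull C Z := fun _ hx K hK => hx K ⟨hK.1, h.trans hK.2⟩

lemma hull_mem {X : Type*} {C : Set (Set X)} (hC : IsConvexitySpace C) (Y : Set X) :
    convHull C Y ∈ C :=
  hC.2.2.1 _ (fun _ h => h.1) ⟨Set.univ, hC.2.1, Set.subset_univ _⟩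

def Tv {X : Type*} (C : Set (Set X)) (κ ι : Type*) : Prop :=
  ∀ f : ι → X, ∃ c : ι → κ, ∃ q, ∀ j, q ∈ convHull C (f '' {i | c i = j})

lemma tv_two {X : Type*} {C : Set (Set X)} {r : ℕ} (hR : RadonLE C r)
    (ι : Type*) [Fintype ι] (h : r ≤ Fintype.card ι) : Tv C Bool ι := by
  intro f
  by_cases hf : Function.Injective f
  · obtain ⟨A, B, hAB, hd, q, hqA, hqB⟩ := hR (Finset.univ.image f) (by
      rw [Finset.card_image_of_injective _ hf]; exact h)
    refine ⟨fun i => decide (f i ∈ A), q, ?_⟩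
    have hex : ∀ x, x ∈ A ∨ x ∈ B → ∃ i, f i = x := by
      intro x hx
      have : x ∈ (↑A ∪ ↑B : Set X) := by simpa using hx
      rw [hAB] at this
      simpa using this
    intro j
    cases j with
    | true =>
      refine hull_mono ?_ hqA
      intro x hx
      obtain ⟨i, rfl⟩ := hex x (Or.inl hx)
      exact ⟨i, by simpa using hx, rfl⟩
    | false =>
      refine hull_mono ?_ hqB
      intro x hx
      obtain ⟨i, rfl⟩ := hex x (Or.inr hx)
      refine ⟨i, ?_, rfl⟩
      have : f i ∉ A := fun hA => Set.disjoint_left.1 hd hA hx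
      simpa using this
  · simp only [Function.Injective, not_forall] at hf
    obtain ⟨a, b, hab, hne⟩ := hf
    refine ⟨fun i => decide (i = a), f a, ?_⟩
    intro j
    apply sub_hull
    cases j with
    | true => exact ⟨a, by simp, rfl⟩
    | false => exact ⟨b, by simpa using Ne.symm hne, hab.symm⟩

lemma tv_mul {X : Type*} {C : Set (Set X)} (hC : IsConvexitySpace C) {κ ι μ ν : Type*}
    (h1 : Tv C κ ι) (h2 : Tv C μ ν) : Tv C (μ × κ) (ν × ι) := by
  intro f
  choose c p hp using fun a : ν => h1 (fun b => f (a, b))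
  obtain ⟨d, q, hq⟩ := h2 p
  refine ⟨fun x => (d x.1, c x.1 x.2), q, ?_⟩
  rintro ⟨j, i⟩
  refine hull_sub (hull_mem hC _) ?_ (hq j)
  rintro _ ⟨a, ha, rfl⟩
  refine hull_mono ?_ (hp a i)
  rintro _ ⟨b, hb, rfl⟩
  refine ⟨(a, b), ?_, rfl⟩
  simp only [Set.mem_ofPred_eq] at ha hb ⊢
  rw [ha, hb]

lemma tv_map {X : Type*} {C : Set (Set X)} {κ κ' ι : Type*}
    (h1 : Tv C κ ι) (g : κ → κ') (hg : Function.Surjective g) : Tv C κ' ι := by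
  intro f
  obtain ⟨c, q, hq⟩ := h1 f
  refine ⟨g ∘ c, q, fun j => ?_⟩
  obtain ⟨i, rfl⟩ := hg j
  refine hull_mono ?_ (hq i)
  rintro _ ⟨b, hb, rfl⟩
  exact ⟨b, congrArg g hb, rfl⟩

lemma tv_emb {X : Type*} {C : Set (Set X)} {κ ι ι' : Type*}
    (h1 : Tv C κ ι) (g : ι ≃ ι') : Tv C κ ι' := by
  intro f
  obtain ⟨c, q, hq⟩ := h1 (f ∘ g)
  refine ⟨c ∘ g.symm, q, fun j => ?_⟩
  refine hull_mono ?_ (hq j)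
  rintro _ ⟨b, hb, rfl⟩
  exact ⟨g b, by simpa using hb, rfl⟩

lemma tv_pow {X : Type*} {C : Set (Set X)} (hC : IsConvexitySpace C) {r : ℕ}
    (hR : RadonLE C r) : ∀ j : ℕ, Tv C (Fin (2^j)) (Fin (r^j)) := by
  intro j
  induction j with
  | zero =>
    intro f
    refine ⟨fun _ => ⟨0, by simp⟩, f ⟨0, by simp⟩, fun j => sub_hull ⟨⟨0, by simp⟩, ?_, rfl⟩⟩
    ext
    have := j.2
    simp at this ⊢
  | succ j ih =>
    have h2 : Tv C (Fin 2) (Fin r) :=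
      tv_map (tv_two hR (Fin r) (by simp)) finTwoEquiv.symm finTwoEquiv.symm.surjective
    have h3 := tv_mul hC h2 ih
    rw [pow_succ, pow_succ]
    exact tv_emb (tv_map h3 finProdFinEquiv finProdFinEquiv.surjective) finProdFinEquiv

lemma tv_k {X : Type*} {C : Set (Set X)} (hC : IsConvexitySpace C) {r : ℕ}
    (hR : RadonLE C r) (k : ℕ) (hk : 0 < k) : Tv C (Fin k) (Fin (r^k)) := by
  have hlt : k < 2^k := Nat.lt_two_pow_self
  refine tv_map (tv_pow hC hR k) (fun i => if h : i.1 < k then ⟨i.1, h⟩ else ⟨0, hk⟩) ?_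
  intro i
  exact ⟨⟨i.1, by omega⟩, by simp⟩

lemma helly {X : Type*} [Nonempty X] {C : Set (Set X)} {r : ℕ}
    (hR : RadonLE C r) {V : Type*} (F : V → Set X) (hF : ∀ v, F v ∈ C) :
    ∀ (n : ℕ) (S : Finset V), S.card = n →
      (∀ e : Fin r → V, (∀ i, e i ∈ S) → ∃ q, ∀ i, q ∈ F (e i)) →
      ∃ q, ∀ v ∈ S, q ∈ F v := by
  intro n
  induction n with
  | zero =>
    intro S hS _
    rw [Finset.card_eq_zero] at hS
    subst hS
    exact ⟨Classical.arbitrary X, by simp⟩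
  | succ n ih =>
    intro S hS he
    by_cases hle : S.card ≤ r
    · have hpos : 0 < S.card := by omega
      let g : Fin r → V := fun i =>
        if h : i.1 < S.card then (S.equivFin.symm ⟨i.1, h⟩ : V)
        else (S.equivFin.symm ⟨0, hpos⟩ : V)
      obtain ⟨q, hq⟩ := he g (by
        intro i
        simp only [g]
        split_ifs
        · exact Subtype.prop _
        · exact Subtype.prop _)
      refine ⟨q, fun v hv => ?_⟩
      have := hq ⟨(S.equivFin ⟨v, hv⟩).1, lt_of_lt_of_le (Fin.is_lt _) hle⟩
      simpa [g] using this
    · have h1 : ∀ v : S, ∃ q, ∀ w ∈ S.erase v.1, q ∈ F w := by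
        intro v
        refine ih _ (by rw [Finset.card_erase_of_mem v.2, hS]; rfl) ?_
        intro e hh
        exact he e fun i => Finset.mem_of_mem_erase (hh i)
      choose p hp using h1
      obtain ⟨c, q, hq⟩ := tv_two hR S (by rw [Fintype.card_coe]; omega) p
      refine ⟨q, fun v hv => ?_⟩
      refine hull_sub (hF v) ?_ (hq (!(c ⟨v, hv⟩)))
      rintro _ ⟨w, hw, rfl⟩
      apply hp w
      rw [Finset.mem_erase]
      refine ⟨?_, hv⟩
      rintro rfl
      simp at hw

lemma colorful {X : Type*} {C : Set (Set X)} {h N : ℕ} (hT : Tv C (Fin h) (Fin N))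
    {V : Type*} (F : V → Set X) (hF : ∀ v, F v ∈ C)
    (e : Fin (h^N) → Fin h → V)
    (hσ : ∀ σ : Fin (h^N) → Fin h, ∃ q, ∀ i, q ∈ F (e i (σ i))) :
    ∃ i, ∃ q, ∀ j, q ∈ F (e i j) := by
  choose x hx using hσ
  let Q : (Fin N → Fin h) ≃ Fin (h^N) := finFunctionFinEquiv
  obtain ⟨c, q, hq⟩ := hT (fun s => x (fun i => Q.symm i s))
  refine ⟨Q c, q, fun j => ?_⟩
  refine hull_sub (hF _) ?_ (hq j)
  rintro _ ⟨s, hs, rfl⟩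
  have := hx (fun i => Q.symm i s) (Q c)
  simp only [Equiv.symm_apply_apply] at this
  rwa [show c s = j from hs] at this

end TvProof

section MainProof

lemma density {Y : Type u} [Fintype Y] {X : Type*} (C : Set (Set X)) (ι : Y → X) (m T : ℕ)
    (hm : 0 < m) (hT : Tv C (Fin m) (Fin T)) :
    (1 / (m:ℝ)^T) * (Fintype.card (Fin T → Y) : ℝ)^m ≤
      (Finset.univ.filter fun u : Fin m → Fin T → Y =>
        ¬ ¬ ∃ q, ∀ i, q ∈ convHull C (Set.range fun s => ι (u i s))).card := by
  let z : Fin m := ⟨0, hm⟩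
  let OK : (Fin T → Fin m) → (Fin T → Y) → Prop := fun c g =>
    ∃ q, ∀ j, q ∈ convHull C ((fun s => ι (g s)) '' {s | c s = j})
  set G := Finset.univ.filter fun u : Fin m → Fin T → Y =>
        ¬ ¬ ∃ q, ∀ i, q ∈ convHull C (Set.range fun s => ι (u i s)) with hG
  have h1 : ∀ c : Fin T → Fin m,
      (Finset.univ.filter fun u : Fin m → Fin T → Y => OK c (u z)).card ≤ G.card := by
    intro c
    refine Finset.card_le_card_of_injOn
      (fun u j s => u (Equiv.swap z (c s) j) s) ?_ ?_
    · intro u hu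
      have hu : OK c (u z) := by simpa using hu
      obtain ⟨q, hq⟩ := hu
      simp only [hG, not_not, Finset.coe_filter, Finset.mem_univ, true_and, Set.mem_ofPred_eq]
      refine ⟨q, fun i => hull_mono ?_ (hq i)⟩
      rintro _ ⟨s, hs, rfl⟩
      have hs : c s = i := hs
      refine ⟨s, ?_⟩
      simp [← hs]
    · intro u _ v _ huv
      funext j s
      have := congrFun (congrFun huv (Equiv.swap z (c s) j)) s
      simpa using this
  have h2 : Fintype.card (Fin m → Fin T → Y) ≤
      ∑ c : Fin T → Fin m,
        (Finset.univ.filter fun u : Fin m → Fin T → Y => OK c (u z)).card := by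
    have : ∑ c : Fin T → Fin m,
        (Finset.univ.filter fun u : Fin m → Fin T → Y => OK c (u z)).card
        = ∑ u : Fin m → Fin T → Y, (Finset.univ.filter fun c => OK c (u z)).card := by
      simp only [Finset.card_filter]
      exact Finset.sum_comm
    rw [this, Fintype.card_eq_sum_ones]
    apply Finset.sum_le_sum
    intro u _
    obtain ⟨c, hc⟩ := hT (fun s => ι (u z s))
    exact Finset.card_pos.2 ⟨c, Finset.mem_filter.2 ⟨Finset.mem_univ _, hc⟩⟩
  have h3 : Fintype.card (Fin m → Fin T → Y) ≤ m^T * G.card := by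
    refine h2.trans ((Finset.sum_le_sum fun c _ => h1 c).trans ?_)
    simp
  have h4 : (Fintype.card (Fin T → Y))^m ≤ m^T * G.card := by
    rw [Fintype.card_fun, Fintype.card_fin] at h3
    exact h3
  have h5 : ((Fintype.card (Fin T → Y) : ℝ))^m ≤ (m:ℝ)^T * G.card := by exact_mod_cast h4
  have hmT : (0:ℝ) < (m:ℝ)^T := by positivity
  rw [one_div, inv_mul_le_iff₀ hmT]
  exact h5

lemma card_meet {Y : Type u} [Fintype Y] (T : ℕ) (s : Fin T) (Q : Finset Y) :
    (Finset.univ.filter fun v : Fin T → Y => v s ∈ Q).card * Fintype.card Y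
      ≤ Q.card * Fintype.card Y ^ T := by
  have : (Finset.univ.filter fun v : Fin T → Y => v s ∈ Q)
      = Fintype.piFinset (Function.update (fun _ => Finset.univ) s Q) := by
    ext v
    simp only [Finset.mem_filter, Finset.mem_univ, true_and, Fintype.mem_piFinset]
    constructor
    · intro hv t
      by_cases ht : t = s
      · subst ht; simpa using hv
      · simp [ht]
    · intro hv
      simpa using hv s
  rw [this, Fintype.card_piFinset]
  have h2 : ∀ t, (Function.update (fun _ => (Finset.univ : Finset Y)) s Q t).card
      = Function.update (fun _ : Fin T => Fintype.card Y) s Q.card t := by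
    intro t
    by_cases ht : t = s
    · subst ht; simp
    · simp [ht]
  simp only [h2]
  rw [Finset.prod_update_of_mem (Finset.mem_univ _)]
  simp only [Finset.prod_const]
  rw [mul_assoc, ← pow_succ]
  have : (Finset.univ \ {s} : Finset (Fin T)).card + 1 = T := by
    rw [Finset.card_sdiff_of_subset (Finset.subset_univ _)]
    have := s.2
    simp
    omega
  rw [this]

lemma disjoint_tuples {Y : Type u} [Fintype Y] [Nonempty Y] (T k : ℕ) (β : ℝ)
    (S : Finset (Fin T → Y)) (hS : β * Fintype.card (Fin T → Y) ≤ S.card)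
    (hk : (T:ℝ)^2 * k < β * Fintype.card Y) :
    ∀ j ≤ k, ∃ a : Fin j → Fin T → Y, (∀ i, a i ∈ S) ∧
      ∀ i i', i ≠ i' → ∀ s s', a i s ≠ a i' s' := by
  have hnpos : 0 < Fintype.card Y := Fintype.card_pos
  have hnpos' : (0:ℝ) < Fintype.card Y := by exact_mod_cast hnpos
  intro j
  induction j with
  | zero => exact fun _ => ⟨fun i => i.elim0, fun i => i.elim0, fun i => i.elim0⟩
  | succ j ih =>
    intro hj
    obtain ⟨a, haS, had⟩ := ih (by omega)
    let Q : Finset Y := Finset.univ.image fun p : Fin j × Fin T => a p.1 p.2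
    have hQ : Q.card ≤ j * T := by
      refine Finset.card_image_le.trans ?_
      simp
    obtain ⟨v, hv, hvQ⟩ : ∃ v ∈ S, ∀ s, v s ∉ Q := by
      by_contra hcon
      push Not at hcon
      have hsub : S ⊆ Finset.univ.biUnion fun s : Fin T =>
          Finset.univ.filter fun v : Fin T → Y => v s ∈ Q := by
        intro v hv
        simpa using hcon v hv
      have h1 := (Finset.card_le_card hsub).trans Finset.card_biUnion_le
      have h2 : S.card * Fintype.card Y ≤ T * (j * T * Fintype.card Y ^ T) := by
        refine (Nat.mul_le_mul_right _ h1).trans ?_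
        rw [Finset.sum_mul]
        refine (Finset.sum_le_sum fun s _ => (card_meet T s Q).trans
          (Nat.mul_le_mul_right _ hQ)).trans ?_
        simp
      have h3 : (S.card : ℝ) * Fintype.card Y ≤ T * (j * T * (Fintype.card Y:ℝ) ^ T) := by
        exact_mod_cast h2
      have h4 : β * (Fintype.card Y : ℝ)^T ≤ S.card := by
        simpa using hS
      have hjk : (j:ℝ) ≤ k := by exact_mod_cast (by omega : j ≤ k)
      have hp : (0:ℝ) < (Fintype.card Y : ℝ)^T := by positivity
      have h5 : (β * Fintype.card Y) * (Fintype.card Y : ℝ)^T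
          ≤ ((T:ℝ)^2 * k) * (Fintype.card Y : ℝ)^T := by
        calc _ = (β * (Fintype.card Y : ℝ)^T) * Fintype.card Y := by ring
          _ ≤ S.card * Fintype.card Y := by gcongr
          _ ≤ _ := h3
          _ = ((T:ℝ)^2 * j) * (Fintype.card Y : ℝ)^T := by ring
          _ ≤ _ := by gcongr
      have := le_of_mul_le_mul_right h5 hp
      linarith
    have hne : ∀ i s s', v s ≠ a i s' := by
      intro i s s' hh
      apply hvQ s
      simp only [Q, Finset.mem_image]
      exact ⟨(i, s'), Finset.mem_univ _, hh.symm⟩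
    refine ⟨Fin.cons v a, ?_, ?_⟩
    · intro i
      refine Fin.cases ?_ ?_ i
      · simpa using hv
      · intro i; simpa using haS i
    · intro i i'
      refine Fin.cases ?_ (fun i => ?_) i <;> refine Fin.cases ?_ (fun i' => ?_) i'
      · intro hh; exact absurd rfl hh
      · intro _ s s'
        simpa using hne i' s s'
      · intro _ s s'
        simpa using (hne i s' s).symm
      · intro hh s s'
        simpa using had i i' (fun h => hh (by rw [h])) s s'

lemma main_r (r : ℕ) : ∃ c : ℕ, ∀ (X : Type u), Nonempty X → ∀ C : Set (Set X),
    IsConvexitySpace C → RadonLE C r → ∀ k : ℕ, 2 ≤ k →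
        ∀ Y : Finset X, c * k ≤ Y.card → HasTverbergPartition C k Y := by
  rcases Nat.eq_zero_or_pos r with rfl | hr
  · refine ⟨0, ?_⟩
    intro X _ C hC hR
    obtain ⟨A, B, hAB, _, q, hq, _⟩ := hR ∅ (by simp)
    have hA : (A : Set X) ⊆ ∅ := by
      intro x hx
      have : x ∈ (↑A ∪ ↑B : Set X) := Or.inl hx
      rw [hAB] at this
      simpa using this
    exact absurd (hull_sub hC.1 hA hq) (by simp)
  let m := r ^ (r ^ r)
  have hm : 0 < m := by positivity
  let T := r ^ m
  obtain ⟨β, hβ, hfrac⟩ := frac.{u} m r (1 / (m:ℝ)^T) (by positivity)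
  refine ⟨⌈(T:ℝ)^2 / β⌉₊ + 1, ?_⟩
  intro X hX C hC hR k hk Y hY
  have hYpos : 0 < Y.card := lt_of_lt_of_le (by positivity) hY
  have : Nonempty Y := (Finset.card_pos.1 hYpos).to_subtype
  let F : (Fin T → Y) → Set X := fun v => convHull C (Set.range fun s => (v s : X))
  have hF : ∀ v, F v ∈ C := fun v => hull_mem hC _
  obtain ⟨S, hSc, hS⟩ := hfrac (Fin T → Y)
    (fun e => ¬ ∃ q, ∀ i, q ∈ F (e i)) (fun u => ¬ ∃ q, ∀ i, q ∈ F (u i)) (by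
      intro u hu
      by_contra hcon
      push Not at hcon
      apply hu
      obtain ⟨q, hq⟩ := helly hR (fun i : Fin m => F (u i)) (fun i => hF _) _ Finset.univ rfl
        (fun e _ => hcon e)
      exact ⟨q, fun i => hq i (Finset.mem_univ _)⟩) (by
      intro e he
      by_contra hcon
      simp only [not_exists_not] at hcon
      obtain ⟨i, q, hq⟩ := colorful (tv_k hC hR r hr) F hF e hcon
      exact he i ⟨q, hq⟩) (by
      convert density C (fun y : Y => (y : X)) m T hm (tv_k hC hR m hm))
  obtain ⟨q, hq⟩ := helly hR F hF _ S rfl (fun e he => not_not.1 (hS e he))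
  obtain ⟨a, haS, had⟩ := disjoint_tuples T k β S hSc (by
    rw [Fintype.card_coe]
    have h1 : (T:ℝ)^2 / β < ⌈(T:ℝ)^2 / β⌉₊ + 1 :=
      lt_of_le_of_lt (Nat.le_ceil _) (by linarith)
    have h2 : ((⌈(T:ℝ)^2 / β⌉₊ : ℝ) + 1) * k ≤ Y.card := by exact_mod_cast hY
    have hk0 : (0:ℝ) < k := by exact_mod_cast (by omega : 0 < k)
    have h3 : (T:ℝ)^2 / β * k < Y.card := lt_of_lt_of_le (by gcongr) h2
    rw [div_mul_eq_mul_div, div_lt_iff₀ hβ] at h3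
    linarith) k le_rfl
  let z : Fin k := ⟨0, by omega⟩
  let col : X → Fin k := fun x =>
    if h : ∃ i, ∃ s, (a i s : X) = x then h.choose else z
  have hcol : ∀ i s, col (a i s) = i := by
    intro i s
    have hex : ∃ i', ∃ s', (a i' s' : X) = a i s := ⟨i, s, rfl⟩
    have h1 : col (a i s) = hex.choose := by simp only [col, dif_pos hex]
    rw [h1]
    obtain ⟨s', hs'⟩ := hex.choose_spec
    by_contra hne
    exact had _ _ hne s' s (Subtype.ext hs')
  refine ⟨fun i => Y.filter fun x => col x = i, ?_, ?_, q, ?_⟩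
  · ext x
    simp
  · intro i j hij
    rw [Set.disjoint_left]
    intro x hx hx'
    simp only [Finset.coe_filter, Set.mem_ofPred_eq] at hx hx'
    exact hij (hx.2.symm.trans hx'.2)
  · rw [Set.mem_iInter]
    intro i
    refine hull_mono ?_ (hq (a i) (haS i))
    rintro _ ⟨s, rfl⟩
    simp [hcol]

end MainProof

/-- (Pálvölgyi) There is a function `c` such that every convexity space with
Radon number at most `r` has `k`-th Tverberg number at most `c r * k` for all `k ≥ 2`. -/
theorem tverberg_linear_in_k :
    ∃ c : ℕ → ℕ, ∀ (X : Type u), Nonempty X → ∀ C : Set (Set X), IsConvexitySpace C →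
      ∀ r : ℕ, RadonLE C r → ∀ k : ℕ, 2 ≤ k →
        ∀ Y : Finset X, c r * k ≤ Y.card → HasTverbergPartition C k Y := by
  choose c hc using main_r.{u}
  exact ⟨c, fun X hX C hC r hR k hk Y hY => hc r X hX C hC hR k hk Y hY⟩
end

section
/- There exists a function m : ℕ → ℕ such that every convexity space (X, C) with Radon number r(X, C) ≤ r has colorful Helly number h_c(X, C) ≤ m(r). -/
open scoped Classical

universe u

/-- Indexed Tverberg property. -/
def TvIdx {X : Type*} (C : Set (Set X)) (ι κ : Type) : Prop :=
  ∀ p : ι → X, ∃ (f : ι → κ) (x : X), ∀ j, ∀ K ∈ C, (∀ i, f i = j → p i ∈ K) → x ∈ K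

theorem radon_idx {X : Type*} {C : Set (Set X)} {r : ℕ} (h : RadonLE C r)
    {ι : Type*} [Fintype ι] (hc : r ≤ Fintype.card ι) (p : ι → X) :
    ∃ (f : ι → Bool) (x : X), ∀ j, ∀ K ∈ C, (∀ i, f i = j → p i ∈ K) → x ∈ K := by
  by_cases hp : Function.Injective p
  · obtain ⟨A, B, hAB, hd, x, hxA, hxB⟩ := h (Finset.univ.image p)
      (by rw [Finset.card_image_of_injective _ hp]; simpa using hc)
    refine ⟨fun i => decide (p i ∈ A), x, ?_⟩
    rintro (_ | _) K hK hi
    · refine hxB K ⟨hK, ?_⟩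
      intro y hy
      have hy' : y ∈ (↑(Finset.univ.image p) : Set X) := by rw [← hAB]; exact Or.inr hy
      simp only [Finset.coe_image, Finset.coe_univ, Set.image_univ, Set.mem_range] at hy'
      obtain ⟨i, rfl⟩ := hy'
      refine hi i ?_
      simp only [decide_eq_false_iff_not]
      intro hA
      exact Set.disjoint_left.1 hd hA hy
    · refine hxA K ⟨hK, ?_⟩
      intro y hy
      have hy' : y ∈ (↑(Finset.univ.image p) : Set X) := by rw [← hAB]; exact Or.inl hy
      simp only [Finset.coe_image, Finset.coe_univ, Set.image_univ, Set.mem_range] at hy'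
      obtain ⟨i, rfl⟩ := hy'
      exact hi i (by simpa using hy)
  · simp only [Function.Injective, not_forall] at hp
    obtain ⟨a, b, hab, hne⟩ := hp
    refine ⟨fun i => decide (i = a), p a, ?_⟩
    rintro (_ | _) K hK hi
    · rw [hab]
      exact hi b (by simpa using fun h => hne h.symm)
    · exact hi a (by simp)

theorem tv_idx {X : Type*} {C : Set (Set X)} {r : ℕ} (h : RadonLE C r) [Nonempty X] (s : ℕ) :
    TvIdx C (Fin s → Fin r) (Fin s → Bool) := by
  induction s with
  | zero =>
    intro p
    refine ⟨fun _ => default, p default, fun j K _ hi => hi _ (Subsingleton.elim _ _)⟩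
  | succ s ih =>
    intro p
    choose f z hz using fun b : Fin r => ih (fun v => p (Fin.cons b v))
    obtain ⟨g, x, hx⟩ := radon_idx h (ι := Fin r) (by simp) z
    refine ⟨fun v => Fin.cons (g (v 0)) (f (v 0) (Fin.tail v)), x, ?_⟩
    intro j K hK hi
    refine hx (j 0) K hK fun b hb => hz b (Fin.tail j) K hK fun v hv => hi _ ?_
    simp [hb, hv]

theorem helly_small {X : Type*} {C : Set (Set X)} {r : ℕ} (h : RadonLE C r)
    (F : Finset (Set X)) : ↑F ⊆ C → ¬ IsIntersecting F →
    ∃ G ⊆ F, ¬ IsIntersecting G ∧ G.card < r := by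
  induction F using Finset.strongInduction with
  | H F ih =>
    intro hF hn
    by_cases hc : F.card < r
    · exact ⟨F, subset_rfl, hn, hc⟩
    by_cases hK : ∃ K ∈ F, ¬ IsIntersecting (F.erase K)
    · obtain ⟨K, hKF, hK⟩ := hK
      obtain ⟨G, hG, h1, h2⟩ := ih _ (Finset.erase_ssubset hKF)
        (fun S hS => hF (Finset.mem_of_mem_erase hS)) hK
      exact ⟨G, hG.trans (Finset.erase_subset _ _), h1, h2⟩
    · exfalso
      push Not at hK
      choose p hp using fun K : F => hK K.1 K.2
      obtain ⟨f, x, hx⟩ := radon_idx h (ι := F) (by simpa using hc) p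
      refine hn ⟨x, fun K hKF => ?_⟩
      refine hx (!(f ⟨K, hKF⟩)) K (hF hKF) fun i hi => hp i K ?_
      refine Finset.mem_erase.2 ⟨?_, hKF⟩
      rintro rfl
      simp at hi

/-- (Holmsen–Lee) There is a function `m` such that every convexity space with
Radon number at most `r` has colorful Helly number at most `m r`. -/
theorem radon_implies_colorful_helly :
    ∃ m : ℕ → ℕ, ∀ (X : Type u), Nonempty X → ∀ C : Set (Set X), IsConvexitySpace C →
      ∀ r : ℕ, RadonLE C r → ColorfulHellyLE C (m r) := by
  refine ⟨fun r => Fintype.card ((Fin r → Fin r) → (Fin r → Bool)), ?_⟩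
  intro X hX C _ r hr F hF hK
  by_contra hcon
  push Not at hcon
  have key : ∀ i, ∃ g : (Fin r → Bool) → Set X, (∀ j, g j ∈ F i) ∧ ¬ ∃ x, ∀ j, x ∈ g j := by
    intro i
    obtain ⟨G, hGF, hG, hc⟩ := helly_small hr (F i) (hF i) (hcon i)
    have hne : Nonempty G := by
      by_contra hne
      exact hG ⟨hX.some, fun K hKG => (hne ⟨⟨K, hKG⟩⟩).elim⟩
    have hle : Fintype.card G ≤ Fintype.card (Fin r → Bool) := by
      simp only [Fintype.card_coe, Fintype.card_fun, Fintype.card_bool, Fintype.card_fin]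
      exact (hc.trans Nat.lt_two_pow_self).le
    obtain ⟨e⟩ := Function.Embedding.nonempty_of_card_le hle
    refine ⟨fun j => (Function.invFun e j).1, fun j => hGF (Function.invFun e j).2, ?_⟩
    rintro ⟨x, hx⟩
    refine hG ⟨x, fun K hKG => ?_⟩
    have := hx (e ⟨K, hKG⟩)
    beta_reduce at this
    rwa [Function.leftInverse_invFun e.injective] at this
  choose g hgF hg using key
  let e := (Fintype.equivFin ((Fin r → Fin r) → (Fin r → Bool))).symm
  choose p hp using fun y => hK (fun i => g i (e i y)) (fun i => hgF i _)
  obtain ⟨f, x, hx⟩ := tv_idx hr r p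
  refine hg (e.symm f) ⟨x, fun j => hx j _ (hF _ (hgF _ j)) fun y hy => ?_⟩
  have := Set.mem_iInter.1 (hp y) (e.symm f)
  simpa [hy] using this
end

section
/- For all integers d, h ≥ 1 there exist constants c, d' > 0 such that the following holds: if (X, S) is a compact set system whose VC-dimension is at most d and whose Helly number is at most h, then the set system S^∩ obtained by taking all intersections of nonempty subcollections of S satisfies τ(F) ≤ c · τ*(F)^(d' · ln(τ*(F))) for every finite family F ⊆ S^∩; in particular, (X, S^∩) has the weak ε-net property. -/
open scoped Classical

universe u

section Proof

open Finset

lemma wen_sum_choose (n d : ℕ) : ∑ i ∈ Finset.Iic d, n.choose i ≤ (n + 1) ^ d := by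
  induction d with
  | zero => simp [show Finset.Iic 0 = {0} from rfl]
  | succ d ih =>
    have h1 : Finset.Iic (d + 1) = insert (d + 1) (Finset.Iic d) := by
      ext x; simp; omega
    rw [h1, Finset.sum_insert (by simp)]
    have h2 : n.choose (d + 1) ≤ n ^ (d + 1) := Nat.choose_le_pow n (d + 1)
    have h3 : n ^ d ≤ (n + 1) ^ d := Nat.pow_le_pow_left (by omega) d
    have h4 : n ^ (d + 1) ≤ (n + 1) ^ d * n := by
      rw [pow_succ]; exact Nat.mul_le_mul_right n h3
    rw [pow_succ]
    linarith

lemma wen_sauer {X : Type*} (S : Set (Set X)) (d : ℕ) (hS : VCDimLE S d)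
    (Y : Finset X) (N : Finset (Set X)) (hN : ↑N ⊆ S)
    (hinj : ∀ B ∈ N, ∀ B' ∈ N, B ≠ B' → ∃ y ∈ Y, ¬ (y ∈ B ↔ y ∈ B')) :
    N.card ≤ (Y.card + 1) ^ d := by
  let φ : Set X → Finset Y := fun B => Finset.univ.filter (fun y : Y => y.1 ∈ B)
  have hφ : Set.InjOn φ ↑N := by
    intro B hB B' hB' he
    by_contra hne
    obtain ⟨y, hy, hyy⟩ := hinj B hB B' hB' hne
    apply hyy
    have := congrArg (fun s : Finset Y => (⟨y, hy⟩ : Y) ∈ s) he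
    simpa [φ] using this
  have hvc : (N.image φ).vcDim ≤ d := by
    unfold Finset.vcDim
    apply Finset.sup_le
    intro s hs
    rw [Finset.mem_shatterer] at hs
    have := hS (s.map (Function.Embedding.subtype _)) ?_
    · simpa using this
    · intro Z hZ
      obtain ⟨u, hu, hsu⟩ := hs (t := s.filter (fun y => y.1 ∈ Z)) (Finset.filter_subset _ _)
      obtain ⟨B, hB, rfl⟩ := Finset.mem_image.1 hu
      refine ⟨B, hN hB, ?_⟩
      ext x
      constructor
      · rintro ⟨hx, hxB⟩
        obtain ⟨y, hy, rfl⟩ := Finset.mem_map.1 (Finset.mem_coe.1 hx)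
        have : y ∈ s ∩ φ B := by
          simp only [φ, Finset.mem_inter, Finset.mem_filter, Finset.mem_univ, true_and]
          exact ⟨hy, hxB⟩
        rw [hsu] at this
        exact (Finset.mem_filter.1 this).2
      · intro hx
        obtain ⟨y, hy, rfl⟩ := Finset.mem_map.1 (hZ hx)
        refine ⟨hZ hx, ?_⟩
        have : y ∈ s.filter (fun y => y.1 ∈ Z) := Finset.mem_filter.2 ⟨hy, hx⟩
        rw [← hsu] at this
        simpa [φ] using (Finset.mem_inter.1 this).2
  have h1 : N.card = (N.image φ).card := (Finset.card_image_of_injOn hφ).symm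
  rw [h1]
  refine (Finset.card_le_card_shatterer _).trans
    (Finset.card_shatterer_le_sum_vcDim.trans ?_)
  refine le_trans ?_ (wen_sum_choose Y.card d)
  rw [Fintype.card_coe]
  exact Finset.sum_le_sum_of_subset (by intro x; simp; omega)

/-- greedy hitting -/
lemma wen_greedy {X ι : Type*} (A : Finset X) (w : X → ℝ) (hw : ∀ x, 0 ≤ w x)
    (hA : 0 < ∑ x ∈ A, w x) (η : ℝ) (hη1 : η ≤ 1) (P : Finset ι) (Δ : ι → Set X)
    (hΔ : ∀ p ∈ P, η * ∑ x ∈ A, w x ≤ ∑ x ∈ A.filter (· ∈ Δ p), w x) (m : ℕ) :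
    ∃ Y : Finset X, Y.card ≤ m ∧
      ((P.filter (fun p => ∀ y ∈ Y, y ∉ Δ p)).card : ℝ) ≤ (1 - η) ^ m * P.card := by
  induction m with
  | zero => exact ⟨∅, by simp, by simp⟩
  | succ m ih =>
    obtain ⟨Y, hY, hc⟩ := ih
    set Q := P.filter (fun p => ∀ y ∈ Y, y ∉ Δ p) with hQ
    have hex : ∃ x ∈ A, η * Q.card ≤ ((Q.filter (fun p => x ∈ Δ p)).card : ℝ) := by
      by_contra hcon
      push Not at hcon
      have h1 : ∑ x ∈ A, w x * ((Q.filter (fun p => x ∈ Δ p)).card : ℝ) <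
          ∑ x ∈ A, w x * (η * Q.card) := by
        obtain ⟨x, hx, hxw⟩ : ∃ x ∈ A, 0 < w x := by
          by_contra hh
          push Not at hh
          exact absurd (Finset.sum_nonpos hh) (not_le.2 hA)
        apply Finset.sum_lt_sum
        · intro x hx
          exact mul_le_mul_of_nonneg_left (hcon x hx).le (hw x)
        · exact ⟨x, hx, mul_lt_mul_of_pos_left (hcon x hx) hxw⟩
      have h2 : ∑ x ∈ A, w x * ((Q.filter (fun p => x ∈ Δ p)).card : ℝ) =
          ∑ p ∈ Q, ∑ x ∈ A.filter (· ∈ Δ p), w x := by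
        simp_rw [Finset.sum_filter]
        rw [Finset.sum_comm]
        apply Finset.sum_congr rfl
        intro x _
        rw [← Finset.sum_filter, Finset.sum_const, nsmul_eq_mul, mul_comm]
      have h3 : ∑ p ∈ Q, η * ∑ x ∈ A, w x ≤ ∑ p ∈ Q, ∑ x ∈ A.filter (· ∈ Δ p), w x :=
        Finset.sum_le_sum (fun p hp => hΔ p (Finset.mem_filter.1 hp).1)
      rw [← h2, Finset.sum_const, nsmul_eq_mul] at h3
      rw [← Finset.sum_mul] at h1
      nlinarith
    obtain ⟨x, hx, hxc⟩ := hex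
    refine ⟨insert x Y, (Finset.card_insert_le _ _).trans (by omega), ?_⟩
    have h4 : P.filter (fun p => ∀ y ∈ insert x Y, y ∉ Δ p) = Q.filter (fun p => ¬ x ∈ Δ p) := by
      ext p; simp [hQ]; tauto
    rw [h4]
    have h5 := Finset.card_filter_add_card_filter_not (s := Q) (fun p => x ∈ Δ p)
    have h6 : ((Q.filter (fun p => x ∈ Δ p)).card : ℝ) +
      ((Q.filter (fun p => ¬ x ∈ Δ p)).card : ℝ) = Q.card := by exact_mod_cast h5
    calc ((Q.filter (fun p => ¬ x ∈ Δ p)).card : ℝ) ≤ (1 - η) * Q.card := by linarith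
      _ ≤ (1 - η) * ((1 - η) ^ m * P.card) := mul_le_mul_of_nonneg_left hc (by linarith)
      _ = _ := by ring

lemma wen_hit {X ι : Type*} (A : Finset X) (w : X → ℝ) (hw : ∀ x, 0 ≤ w x)
    (hA : 0 < ∑ x ∈ A, w x) (η : ℝ) (hη1 : η ≤ 1) (P : Finset ι) (Δ : ι → Set X)
    (hΔ : ∀ p ∈ P, η * ∑ x ∈ A, w x ≤ ∑ x ∈ A.filter (· ∈ Δ p), w x) (m : ℕ)
    (hm : (1 - η) ^ m * P.card < 1) :
    ∃ Y : Finset X, Y.card ≤ m ∧ ∀ p ∈ P, ∃ y ∈ Y, y ∈ Δ p := by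
  obtain ⟨Y, hY, hc⟩ := wen_greedy A w hw hA η hη1 P Δ hΔ m
  refine ⟨Y, hY, fun p hp => ?_⟩
  by_contra hcon
  push Not at hcon
  have h1 : 0 < (P.filter (fun p => ∀ y ∈ Y, y ∉ Δ p)).card :=
    Finset.card_pos.2 ⟨p, Finset.mem_filter.2 ⟨hp, hcon⟩⟩
  have h2 : (1 : ℝ) ≤ ((P.filter (fun p => ∀ y ∈ Y, y ∉ Δ p)).card : ℝ) := by exact_mod_cast h1
  linarith

lemma wen_numeric (d k : ℕ) (η : ℝ) (hη1 : η ≤ 1) (hk : 4 * d + 2 ≤ η * k) (hk2 : 2 ≤ k) :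
    (1 - η) ^ (k ^ 2 - 1) * (((k : ℝ) ^ (2 * d) + 1) ^ 2) < 1 := by
  have hkr : (2 : ℝ) ≤ k := by exact_mod_cast hk2
  have h1 : (k : ℝ) ^ (2 * d) + 1 ≤ (k : ℝ) ^ (2 * d + 1) := by
    have : (1 : ℝ) ≤ (k : ℝ) ^ (2 * d) := one_le_pow₀ (by linarith)
    rw [pow_succ]; nlinarith
  have h2 : ((k : ℝ) ^ (2 * d) + 1) ^ 2 ≤ (k : ℝ) ^ (4 * d + 2) := by
    calc _ ≤ ((k : ℝ) ^ (2 * d + 1)) ^ 2 := by gcongr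
      _ = _ := by rw [← pow_mul]; congr 1; ring
  have h3 : (k : ℝ) ^ (4 * d + 2) ≤ Real.exp ((4 * d + 2) * (k - 1)) := by
    have : (k : ℝ) ≤ Real.exp (k - 1) := by
      have := Real.add_one_le_exp ((k : ℝ) - 1); linarith
    calc (k : ℝ) ^ (4 * d + 2) ≤ (Real.exp (k - 1)) ^ (4 * d + 2) := by gcongr
      _ = _ := by rw [← Real.exp_nat_mul]; push_cast; ring_nf
  have h4 : (1 - η) ^ (k ^ 2 - 1) ≤ Real.exp (-(η * (k ^ 2 - 1))) := by
    calc (1 - η) ^ (k ^ 2 - 1) ≤ (Real.exp (-η)) ^ (k ^ 2 - 1) := by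
          apply pow_le_pow_left₀ (by linarith)
          exact Real.one_sub_le_exp_neg η
      _ = _ := by
        rw [← Real.exp_nat_mul, Nat.cast_sub (Nat.one_le_pow _ _ (by omega))]
        push_cast; ring_nf
  calc _ ≤ Real.exp (-(η * (k ^ 2 - 1))) * Real.exp ((4 * d + 2) * (k - 1)) := by
        apply mul_le_mul h4 (h2.trans h3) (by positivity) (by positivity)
    _ = Real.exp (-(η * (k ^ 2 - 1)) + (4 * d + 2) * (k - 1)) := (Real.exp_add _ _).symm
    _ < 1 := by
      rw [Real.exp_lt_one_iff]
      have hd0 : (0 : ℝ) ≤ d := Nat.cast_nonneg d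
      have hη : 0 < η := by
        by_contra hc
        push Not at hc
        nlinarith
      nlinarith [mul_nonneg (sub_nonneg.2 hk) (by linarith : (0 : ℝ) ≤ k - 1)]

lemma wen_sep_card {X : Type*} (S : Set (Set X)) (d : ℕ) (hS : VCDimLE S d)
    (A : Finset X) (w : X → ℝ) (hw : ∀ x, 0 ≤ w x) (hA : 0 < ∑ x ∈ A, w x)
    (η : ℝ) (hη1 : η ≤ 1) (k : ℕ) (hk : 4 * d + 2 ≤ η * k) (hk2 : 2 ≤ k)
    (N : Finset (Set X)) (hN : ↑N ⊆ S)
    (hsep : ∀ B ∈ N, ∀ B' ∈ N, B ≠ B' →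
      η * ∑ x ∈ A, w x ≤ ∑ x ∈ A.filter (fun x => ¬ (x ∈ B ↔ x ∈ B')), w x) :
    N.card ≤ k ^ (2 * d) := by
  by_contra hcon
  push Not at hcon
  obtain ⟨M, hMN, hMc⟩ := Finset.exists_subset_card_eq (Nat.succ_le_of_lt hcon)
  have hP : (M.offDiag.card : ℝ) ≤ ((k : ℝ) ^ (2 * d) + 1) ^ 2 := by
    have h1 : M.offDiag.card ≤ M.card * M.card := by
      rw [Finset.offDiag_card]; omega
    rw [hMc] at h1
    have h2 : (M.offDiag.card : ℝ) ≤ ((k ^ (2 * d) + 1 : ℕ) : ℝ) * ((k ^ (2 * d) + 1 : ℕ) : ℝ) := by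
      exact_mod_cast h1
    push_cast at h2
    nlinarith
  obtain ⟨Y, hY, hYc⟩ := wen_hit A w hw hA η hη1 M.offDiag
    (fun p => {x | ¬ (x ∈ p.1 ↔ x ∈ p.2)}) (by
      rintro ⟨B, B'⟩ hp
      rw [Finset.mem_offDiag] at hp
      convert hsep B (hMN hp.1) B' (hMN hp.2.1) hp.2.2 using 2
      ext x; simp only [Finset.mem_filter]; rfl) (k ^ 2 - 1)
    (lt_of_le_of_lt (mul_le_mul_of_nonneg_left hP (pow_nonneg (by linarith) _))
      (wen_numeric d k η hη1 hk hk2))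
  have h5 := wen_sauer S d hS Y M (fun x hx => hN (hMN hx))
    (fun B hB B' hB' hne => hYc (B, B') (Finset.mem_offDiag.2 ⟨hB, hB', hne⟩))
  have h6 : (Y.card + 1) ^ d ≤ (k ^ 2) ^ d := by
    apply Nat.pow_le_pow_left
    have : 1 ≤ k ^ 2 := Nat.one_le_pow _ _ (by omega)
    omega
  rw [← pow_mul] at h6
  omega

lemma wen_packing {X : Type*} (S : Set (Set X)) (d : ℕ) (hS : VCDimLE S d)
    (A : Finset X) (w : X → ℝ) (hw : ∀ x, 0 ≤ w x) (hA : 0 < ∑ x ∈ A, w x)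
    (η : ℝ) (hη1 : η ≤ 1) (k : ℕ) (hk : 4 * d + 2 ≤ η * k) (hk2 : 2 ≤ k) :
    ∃ N : Finset (Set X), ↑N ⊆ S ∧ N.card ≤ k ^ (2 * d) ∧ ∀ B ∈ S, ∃ B' ∈ N,
      ∑ x ∈ A.filter (fun x => ¬ (x ∈ B ↔ x ∈ B')), w x ≤ η * ∑ x ∈ A, w x := by
  let p : ℕ → Prop := fun n => ∃ N : Finset (Set X), ↑N ⊆ S ∧ N.card = n ∧
    ∀ B ∈ N, ∀ B' ∈ N, B ≠ B' →
      η * ∑ x ∈ A, w x ≤ ∑ x ∈ A.filter (fun x => ¬ (x ∈ B ↔ x ∈ B')), w x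
  have hp0 : p 0 := ⟨∅, by simp, by simp, by simp⟩
  have hη : 0 < η := by
    by_contra hc
    push Not at hc
    have hd0 : (0 : ℝ) ≤ d := Nat.cast_nonneg d
    have : (0 : ℝ) ≤ k := Nat.cast_nonneg k
    nlinarith
  have hm := Nat.findGreatest_spec (P := p) (Nat.zero_le (k ^ (2 * d))) hp0
  obtain ⟨N, hNS, hNc, hsep⟩ := hm
  refine ⟨N, hNS, wen_sep_card S d hS A w hw hA η hη1 k hk hk2 N hNS hsep, ?_⟩
  intro B hB
  by_contra hcon0
  have hcon : ∀ B' ∈ N, η * ∑ x ∈ A, w x <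
      ∑ x ∈ A.filter (fun x => ¬ (x ∈ B ↔ x ∈ B')), w x := by
    intro B' hB'
    by_contra hc
    exact hcon0 ⟨B', hB', not_lt.1 hc⟩
  have hBN : B ∉ N := by
    intro hBN
    have := hcon B hBN
    simp at this
    nlinarith
  have hN' : (↑(insert B N) : Set (Set X)) ⊆ S := by
    rw [Finset.coe_insert]; exact Set.insert_subset hB hNS
  have hsep' : ∀ C ∈ insert B N, ∀ C' ∈ insert B N, C ≠ C' →
      η * ∑ x ∈ A, w x ≤ ∑ x ∈ A.filter (fun x => ¬ (x ∈ C ↔ x ∈ C')), w x := by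
    intro C hC C' hC' hne
    rw [Finset.mem_insert] at hC hC'
    rcases hC with rfl | hC <;> rcases hC' with rfl | hC'
    · exact absurd rfl hne
    · exact (hcon C' hC').le
    · have := (hcon C hC).le
      refine this.trans (le_of_eq (Finset.sum_congr ?_ (fun _ _ => rfl)))
      ext x
      simp only [Finset.mem_filter]
      tauto
    · exact hsep C hC C' hC' hne
  have hcard : (insert B N).card = N.card + 1 := Finset.card_insert_of_notMem hBN
  have hle := wen_sep_card S d hS A w hw hA η hη1 k hk hk2 _ hN' hsep'
  have : p (insert B N).card := ⟨_, hN', rfl, hsep'⟩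
  have := Nat.le_findGreatest hle this
  omega

lemma wen_min {X : Type*} (G : Finset (Set X)) (hG : ¬ IsIntersecting G) :
    ∃ G' ⊆ G, MinNonIntersecting G' := by
  induction G using Finset.strongInduction with
  | H G ih =>
    by_cases h : ∀ K ∈ G, IsIntersecting (G.erase K)
    · exact ⟨G, subset_rfl, hG, h⟩
    · push Not at h
      obtain ⟨K, hK, hKn⟩ := h
      obtain ⟨G', hG', hm⟩ := ih _ (Finset.erase_ssubset hK) hKn
      exact ⟨G', hG'.trans (Finset.erase_subset _ _), hm⟩

lemma wen_biUnion {X ι : Type*} (w : X → ℝ) (hw : ∀ x, 0 ≤ w x) (G : Finset ι)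
    (f : ι → Finset X) : ∑ x ∈ G.biUnion f, w x ≤ ∑ B ∈ G, ∑ x ∈ f B, w x := by
  induction G using Finset.induction_on with
  | empty => simp
  | insert a G ha ih =>
    rw [Finset.biUnion_insert, Finset.sum_insert ha]
    have h3 := Finset.sum_union_inter (s₁ := f a) (s₂ := G.biUnion f) (f := w)
    have h4 : 0 ≤ ∑ x ∈ f a ∩ G.biUnion f, w x := Finset.sum_nonneg (fun x _ => hw x)
    linarith

/-- Sets all of large measure have a common point. -/
lemma wen_large {X : Type*} (S : Set (Set X)) (h : ℕ) (hh : 1 ≤ h)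
    (hC : CompactSystem S) (hH : HellyLE S h)
    (A : Finset X) (w : X → ℝ) (hw : ∀ x, 0 ≤ w x) (hA : 0 < ∑ x ∈ A, w x)
    (D : Set (Set X)) (hD : D ⊆ S)
    (hl : ∀ B ∈ D, (1 - 1 / (h : ℝ)) * ∑ x ∈ A, w x < ∑ x ∈ A.filter (· ∈ B), w x) :
    ∃ x, ∀ B ∈ D, x ∈ B := by
  by_contra hcon
  have hempty : ⋂₀ D = ∅ := by
    rw [Set.eq_empty_iff_forall_notMem]
    intro x hx
    exact hcon ⟨x, fun B hB => hx B hB⟩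
  obtain ⟨G, hGD, hG⟩ := hC D hD hempty
  have hGn : ¬ IsIntersecting G := by
    rintro ⟨x, hx⟩
    have : x ∈ ⋂₀ (↑G : Set (Set X)) := fun B hB => hx B hB
    rw [hG] at this
    exact this
  obtain ⟨G', hG'G, hmin⟩ := wen_min G hGn
  have hcard := hH G' (fun x hx => hD (hGD (hG'G hx))) hmin
  have hAne : A.Nonempty := by
    by_contra hc
    rw [Finset.not_nonempty_iff_eq_empty] at hc
    simp [hc] at hA
  have hG'ne : G'.Nonempty := by
    by_contra hc
    rw [Finset.not_nonempty_iff_eq_empty] at hc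
    apply hmin.1
    exact ⟨hAne.choose, by simp [hc]⟩
  have hcov : A ⊆ G'.biUnion (fun B => A.filter (fun x => ¬ x ∈ B)) := by
    intro x hx
    by_contra hc
    apply hmin.1
    refine ⟨x, fun B hB => ?_⟩
    by_contra hxB
    exact hc (Finset.mem_biUnion.2 ⟨B, hB, Finset.mem_filter.2 ⟨hx, hxB⟩⟩)
  have h1 : ∑ x ∈ A, w x ≤ ∑ B ∈ G', ∑ x ∈ A.filter (fun x => ¬ x ∈ B), w x :=
    (Finset.sum_le_sum_of_subset_of_nonneg hcov (fun x _ _ => hw x)).trans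
      (wen_biUnion w hw _ _)
  have h2 : ∑ B ∈ G', ∑ x ∈ A.filter (fun x => ¬ x ∈ B), w x <
      ∑ B ∈ G', (1 / (h : ℝ)) * ∑ x ∈ A, w x := by
    apply Finset.sum_lt_sum_of_nonempty hG'ne
    intro B hB
    have h3 := hl B (hGD (hG'G hB))
    have h4 := Finset.sum_filter_add_sum_filter_not A (fun x => x ∈ B) w
    linarith
  rw [Finset.sum_const, nsmul_eq_mul] at h2
  have hh0 : (0 : ℝ) < h := by exact_mod_cast hh
  have h5 : (G'.card : ℝ) ≤ h := by exact_mod_cast hcard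
  have h6 : (G'.card : ℝ) * (1 / (h : ℝ) * ∑ x ∈ A, w x) ≤ h * (1 / (h : ℝ) * ∑ x ∈ A, w x) :=
    mul_le_mul_of_nonneg_right h5 (by positivity)
  have h7 : (h : ℝ) * (1 / (h : ℝ) * ∑ x ∈ A, w x) = ∑ x ∈ A, w x := by
    field_simp
  linarith

lemma wen_main {X : Type*} (S : Set (Set X)) (d h : ℕ) (hh : 1 ≤ h)
    (hC : CompactSystem S) (hV : VCDimLE S d) (hH : HellyLE S h)
    (w : X → ℝ) (hw : ∀ x, 0 ≤ w x) (ε₀ : ℝ) (hε0 : 0 < ε₀) (hε1 : ε₀ ≤ 1)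
    (k : ℕ) (hk : 4 * d + 2 ≤ (ε₀ / (4 * h)) * k) (hk2 : 2 ≤ k) (R : ℕ) :
    ∀ (ε : ℝ) (A : Finset X) (F : Finset (Set X)), ε₀ ≤ ε → 0 < ∑ x ∈ A, w x →
      ↑F ⊆ interClosure S →
      (∀ K ∈ F, ε * ∑ x ∈ A, w x ≤ ∑ x ∈ A.filter (· ∈ K), w x) →
      1 < ε * (1 + 1 / (4 * h)) ^ R →
      ∃ T : Finset X, T.card ≤ (k ^ (2 * d) + 1) ^ R ∧ ∀ K ∈ F, ∃ x ∈ T, x ∈ K := by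
  have hh0 : (0 : ℝ) < h := by exact_mod_cast hh
  have hh1 : (1 : ℝ) ≤ h := by exact_mod_cast hh
  induction R with
  | zero =>
    intro ε A F hε hA hF hK h1
    refine ⟨∅, by simp, ?_⟩
    intro K hKF
    have h2 := hK K hKF
    have h3 : ∑ x ∈ A.filter (· ∈ K), w x ≤ ∑ x ∈ A, w x :=
      Finset.sum_le_sum_of_subset_of_nonneg (Finset.filter_subset _ _) (fun x _ _ => hw x)
    simp only [pow_zero, mul_one] at h1
    nlinarith
  | succ R ih =>
    intro ε A F hε hA hF hK h1
    have hDex : ∀ K : Set X, ∃ D : Set (Set X), K ∈ F → (D ⊆ S ∧ K = ⋂₀ D) := by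
      intro K
      by_cases hKF : K ∈ F
      · obtain ⟨D, hD, -, hKD⟩ := hF hKF
        exact ⟨D, fun _ => ⟨hD, hKD⟩⟩
      · exact ⟨∅, fun h => absurd h hKF⟩
    choose D hD using hDex
    set η : ℝ := ε₀ / (4 * h) with hη
    have hη1 : η ≤ 1 := by
      rw [hη, div_le_one (by positivity)]; linarith
    obtain ⟨N, hNS, hNc, hN⟩ := wen_packing S d hV A w hw hA η hη1 k hk hk2
    set W := ∑ x ∈ A, w x with hW
    let F0 := F.filter (fun K => ∀ B ∈ D K, (1 - 1 / (h : ℝ)) * W < ∑ x ∈ A.filter (· ∈ B), w x)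
    obtain ⟨x0, hx0⟩ := wen_large S h hh hC hH A w hw hA {B | ∃ K ∈ F0, B ∈ D K}
      (by
        rintro B ⟨K, hKF, hB⟩
        exact (hD K (Finset.mem_filter.1 hKF).1).1 hB)
      (by
        rintro B ⟨K, hKF, hB⟩
        exact (Finset.mem_filter.1 hKF).2 B hB)
    let FB : Set X → Finset (Set X) := fun B' => F.filter (fun K =>
      ∃ B ∈ D K, ∑ x ∈ A.filter (· ∈ B), w x ≤ (1 - 1 / (h : ℝ)) * W ∧
        ∑ x ∈ A.filter (fun x => ¬ (x ∈ B ↔ x ∈ B')), w x ≤ η * W)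
    have key : ∀ B' : Set X, ∃ T : Finset X, T.card ≤ (k ^ (2 * d) + 1) ^ R ∧
        ∀ K ∈ FB B', ∃ x ∈ T, x ∈ K := by
      intro B'
      by_cases hne : (FB B').Nonempty
      swap
      · rw [Finset.not_nonempty_iff_eq_empty] at hne
        exact ⟨∅, by simp, by simp [hne]⟩
      have hgain : ∀ K ∈ FB B',
          (ε - η) * W ≤ ∑ x ∈ (A.filter (· ∈ B')).filter (· ∈ K), w x ∧
          ∑ x ∈ A.filter (· ∈ B'), w x ≤ (1 - 1 / (h : ℝ) + η) * W := by
        intro K hKB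
        obtain ⟨hKF, B, hBD, hBs, hBB⟩ := Finset.mem_filter.1 hKB
        have hKB : K ⊆ B := by
          rw [(hD K hKF).2]; exact Set.sInter_subset_of_mem hBD
        constructor
        · have hs : A.filter (· ∈ K) ⊆ ((A.filter (· ∈ B')).filter (· ∈ K)) ∪
              A.filter (fun x => ¬ (x ∈ B ↔ x ∈ B')) := by
            intro x hx
            have hx' := Finset.mem_filter.1 hx
            have := hKB hx'.2
            simp only [Finset.mem_union, Finset.mem_filter]
            tauto
          have h2 := Finset.sum_le_sum_of_subset_of_nonneg hs (fun x _ _ => hw x)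
          have h3 := Finset.sum_union_inter (s₁ := ((A.filter (· ∈ B')).filter (· ∈ K)))
            (s₂ := A.filter (fun x => ¬ (x ∈ B ↔ x ∈ B'))) (f := w)
          have h4 : 0 ≤ ∑ x ∈ ((A.filter (· ∈ B')).filter (· ∈ K)) ∩
            A.filter (fun x => ¬ (x ∈ B ↔ x ∈ B')), w x := Finset.sum_nonneg (fun x _ => hw x)
          have h5 := hK K hKF
          linarith
        · have hs : A.filter (· ∈ B') ⊆ (A.filter (· ∈ B)) ∪
              A.filter (fun x => ¬ (x ∈ B ↔ x ∈ B')) := by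
            intro x hx
            have hx' := Finset.mem_filter.1 hx
            simp only [Finset.mem_union, Finset.mem_filter]
            tauto
          have h2 := Finset.sum_le_sum_of_subset_of_nonneg hs (fun x _ _ => hw x)
          have h3 := Finset.sum_union_inter (s₁ := (A.filter (· ∈ B)))
            (s₂ := A.filter (fun x => ¬ (x ∈ B ↔ x ∈ B'))) (f := w)
          have h4 : 0 ≤ ∑ x ∈ (A.filter (· ∈ B)) ∩
            A.filter (fun x => ¬ (x ∈ B ↔ x ∈ B')), w x := Finset.sum_nonneg (fun x _ => hw x)
          linarith
      set g : ℝ := 1 / (4 * h) with hg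
      have hg0 : 0 < g := by positivity
      have hg4 : 1 / (h : ℝ) = 4 * g := by rw [hg]; field_simp
      have hηg : η = ε₀ * g := by rw [hη, hg]; ring
      have hg1 : g ≤ 1 / 4 := by
        rw [hg]
        exact one_div_le_one_div_of_le (by norm_num) (by linarith)
      have hηe : η ≤ ε * g := by rw [hηg]; exact mul_le_mul_of_nonneg_right hε hg0.le
      have hηg1 : η ≤ g := by rw [hηg]; nlinarith
      have hεpos : 0 < ε := lt_of_lt_of_le hε0 hε
      apply ih (ε * (1 + g)) (A.filter (· ∈ B')) (FB B')
      · nlinarith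
      · obtain ⟨K, hKB⟩ := hne
        have h2 := (hgain K hKB).1
        have h3 : ∑ x ∈ (A.filter (· ∈ B')).filter (· ∈ K), w x ≤ ∑ x ∈ A.filter (· ∈ B'), w x :=
          Finset.sum_le_sum_of_subset_of_nonneg (Finset.filter_subset _ _) (fun x _ _ => hw x)
        have h4 : 0 < (ε - η) * W := by
          apply mul_pos _ hA
          nlinarith
        linarith
      · exact fun K hK => hF (Finset.mem_filter.1 hK).1
      · intro K hKB
        obtain ⟨h2, h3⟩ := hgain K hKB
        refine le_trans ?_ h2
        calc ε * (1 + g) * ∑ x ∈ A.filter (· ∈ B'), w x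
            ≤ ε * (1 + g) * ((1 - 1 / (h : ℝ) + η) * W) :=
              mul_le_mul_of_nonneg_left h3 (by positivity)
          _ = (ε * (1 + g) * (1 - 1 / (h : ℝ) + η)) * W := by ring
          _ ≤ (ε - η) * W := by
            apply mul_le_mul_of_nonneg_right _ hA.le
            rw [hg4]
            have h5 : ε * (1 + g) * (1 - 4 * g + η) ≤ ε * (1 + g) * (1 - 3 * g) :=
              mul_le_mul_of_nonneg_left (by linarith) (by positivity)
            have h6 : ε * (1 + g) * (1 - 3 * g) ≤ ε * (1 - g) := by
              rw [mul_assoc]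
              exact mul_le_mul_of_nonneg_left (by nlinarith) hεpos.le
            nlinarith
      · rw [mul_assoc, ← pow_succ']; exact h1
    choose T hTc hT using key
    refine ⟨insert x0 (N.biUnion T), ?_, ?_⟩
    · have h2 : (N.biUnion T).card ≤ N.card * (k ^ (2 * d) + 1) ^ R :=
        Finset.card_biUnion_le_card_mul _ _ _ (fun B _ => hTc B)
      have h3 : N.card * (k ^ (2 * d) + 1) ^ R ≤ k ^ (2 * d) * (k ^ (2 * d) + 1) ^ R :=
        Nat.mul_le_mul_right _ hNc
      have h4 : 1 ≤ (k ^ (2 * d) + 1) ^ R := Nat.one_le_pow _ _ (by omega)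
      have h5 := Finset.card_insert_le x0 (N.biUnion T)
      rw [pow_succ]
      nlinarith
    · intro K hKF
      by_cases hK0 : K ∈ F0
      · refine ⟨x0, Finset.mem_insert_self _ _, ?_⟩
        rw [(hD K hKF).2]
        exact fun B hB => hx0 B ⟨K, hK0, hB⟩
      · have : ∃ B ∈ D K, ∑ x ∈ A.filter (· ∈ B), w x ≤ (1 - 1 / (h : ℝ)) * W := by
          by_contra hc
          push Not at hc
          exact hK0 (Finset.mem_filter.2 ⟨hKF, hc⟩)
        obtain ⟨B, hB, hBW⟩ := this
        obtain ⟨B', hB', hBB⟩ := hN B ((hD K hKF).1 hB)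
        obtain ⟨x, hx, hxK⟩ := hT B' K (Finset.mem_filter.2 ⟨hKF, B, hB, hBW, hBB⟩)
        exact ⟨x, Finset.mem_insert_of_mem (Finset.mem_biUnion.2 ⟨B', hB', hx⟩), hxK⟩

lemma wen_transversal {X : Type*} (F : Finset (Set X)) (T : Finset X) (n : ℕ) (hn : T.card ≤ n)
    (hT : ∀ K ∈ F, ∃ x ∈ T, x ∈ K) : TransversalLE F n := by
  have hex : ∀ K : Set X, ∃ i : ℕ, K ∈ F → ∃ hi : i < T.card, (T.equivFin.symm ⟨i, hi⟩).1 ∈ K := by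
    intro K
    by_cases hK : K ∈ F
    · obtain ⟨x, hx, hxK⟩ := hT K hK
      refine ⟨(T.equivFin ⟨x, hx⟩).1, fun _ => ⟨(T.equivFin ⟨x, hx⟩).2, ?_⟩⟩
      simpa using hxK
    · exact ⟨0, fun h => absurd h hK⟩
  choose φ hφ using hex
  refine ⟨fun i => F.filter (fun K => φ K = i.1), fun i => Finset.filter_subset _ _, ?_, ?_⟩
  · intro K hK
    obtain ⟨hi, -⟩ := hφ K hK
    refine ⟨⟨φ K, lt_of_lt_of_le hi hn⟩, by simp [hK], ?_⟩
    intro j hj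
    have := (Finset.mem_filter.1 hj).2
    exact Fin.ext this.symm
  · rintro i ⟨K, hK⟩
    obtain ⟨hKF, hKi⟩ := Finset.mem_filter.1 hK
    obtain ⟨hi, -⟩ := hφ K hKF
    refine ⟨(T.equivFin.symm ⟨φ K, hi⟩).1, ?_⟩
    intro L hL
    obtain ⟨hLF, hLi⟩ := Finset.mem_filter.1 hL
    obtain ⟨hj, hx⟩ := hφ L hLF
    have : φ L = φ K := hLi.trans hKi.symm
    simpa only [this] using hx

lemma wen_bound (d h : ℕ) (hh : 1 ≤ h) : ∃ c d' : ℝ, 0 < c ∧ 1 ≤ c ∧ 0 < d' ∧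
    ∀ t : ℝ, 1 ≤ t → ∃ k R : ℕ, 4 * d + 2 ≤ (1 / t / (4 * h)) * k ∧ 2 ≤ k ∧
      1 < 1 / t * (1 + 1 / (4 * h)) ^ R ∧
      (((k ^ (2 * d) + 1) ^ R : ℕ) : ℝ) ≤ c * t ^ (d' * Real.log t) := by
  have hh0 : (0 : ℝ) < h := by exact_mod_cast hh
  have hh1 : (1 : ℝ) ≤ h := by exact_mod_cast hh
  have hd0 : (0 : ℝ) ≤ d := Nat.cast_nonneg d
  set q : ℝ := 1 + 1 / (4 * h) with hq
  have hq1 : 1 < q := by rw [hq]; have : (0 : ℝ) < 1 / (4 * h) := by positivity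
                         linarith
  have hlq : 0 < Real.log q := Real.log_pos hq1
  set b : ℝ := 1 / Real.log q with hb
  have hb0 : 0 < b := by positivity
  set Q : ℝ := (4 * d + 2) * (4 * h) + 1 with hQ
  have hQ1 : 1 ≤ Q := by rw [hQ]; have : 0 ≤ (4 * d + 2) * (4 * (h : ℝ)) := by positivity
                         linarith
  set L := Real.log Q with hL
  have hL0 : 0 ≤ L := Real.log_nonneg hQ1
  set p : ℝ := 2 * d + 1 with hp
  have hp0 : 0 < p := by positivity
  refine ⟨Real.exp (p * (L + (1 + b * L) ^ 2)), p * (1 + b), Real.exp_pos _,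
    Real.one_le_exp (by positivity), by positivity, ?_⟩
  intro t ht
  have ht0 : 0 < t := by linarith
  set x := Real.log t with hx
  have hx0 : 0 ≤ x := Real.log_nonneg ht
  set k := ⌈(4 * d + 2) * (4 * h) * t⌉₊ with hk
  set R := ⌊b * x⌋₊ + 1 with hR
  have hkl : (4 * d + 2) * (4 * h) * t ≤ (k : ℝ) := Nat.le_ceil _
  have hku : (k : ℝ) ≤ Q * t := by
    have := Nat.ceil_lt_add_one (a := (4 * d + 2) * (4 * h) * t) (by positivity)
    rw [hQ]; linarith
  have hk2r : (2 : ℝ) ≤ k := by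
    refine le_trans ?_ hkl
    have h1 : (2 : ℝ) ≤ (4 * d + 2) * (4 * h) := by nlinarith
    nlinarith
  have hk2 : 2 ≤ k := by exact_mod_cast hk2r
  refine ⟨k, R, ?_, hk2, ?_, ?_⟩
  · rw [div_div, one_div_mul_eq_div, le_div_iff₀ (by positivity)]
    linarith
  · rw [one_div_mul_eq_div, one_lt_div ht0]
    rw [← Real.log_lt_log_iff ht0 (by positivity), Real.log_pow]
    have : b * x < R := by rw [hR]; push_cast; exact Nat.lt_floor_add_one _
    rw [hb, one_div_mul_eq_div, div_lt_iff₀ hlq] at this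
    exact this
  · have hRu : (R : ℝ) ≤ 1 + b * x := by
      rw [hR]; push_cast
      have := Nat.floor_le (a := b * x) (by positivity)
      linarith
    have h1 : ((k : ℝ) ^ (2 * d) + 1) ≤ (k : ℝ) ^ (2 * d + 1) := by
      have : (1 : ℝ) ≤ (k : ℝ) ^ (2 * d) := one_le_pow₀ (by linarith)
      rw [pow_succ]; nlinarith
    have hlQ : Real.log (Q * t) = L + x := Real.log_mul (by positivity) (by positivity)
    have h2 : ((k : ℝ) ^ (2 * d) + 1) ≤ Real.exp (p * (L + x)) := by
      calc _ ≤ (k : ℝ) ^ (2 * d + 1) := h1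
        _ ≤ (Q * t) ^ (2 * d + 1) := by gcongr
        _ = (Real.exp (L + x)) ^ (2 * d + 1) := by rw [← hlQ, Real.exp_log (by positivity)]
        _ = _ := by rw [← Real.exp_nat_mul, hp]; push_cast; ring_nf
    have h3 : t ^ (p * (1 + b) * x) = Real.exp (p * (1 + b) * x ^ 2) := by
      rw [Real.rpow_def_of_pos ht0, ← hx]; ring_nf
    rw [h3, ← Real.exp_add]
    push_cast
    calc ((k : ℝ) ^ (2 * d) + 1) ^ R ≤ (Real.exp (p * (L + x))) ^ R := by gcongr
      _ = Real.exp (R * (p * (L + x))) := by rw [← Real.exp_nat_mul]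
      _ ≤ Real.exp ((1 + b * x) * (p * (L + x))) := by
        apply Real.exp_le_exp.2
        exact mul_le_mul_of_nonneg_right hRu (by positivity)
      _ ≤ _ := by
        apply Real.exp_le_exp.2
        have h4 : (1 + b * x) * (L + x) ≤ (L + (1 + b * L) ^ 2) + (1 + b) * x ^ 2 := by
          nlinarith [sq_nonneg (1 + b * L - x), sq_nonneg (1 + b * L), sq_nonneg x]
        nlinarith [mul_le_mul_of_nonneg_left h4 hp0.le]

end Proof

/-- (Moran–Yehudayoff) For a compact set system of VC-dimension at most `d` and
Helly number at most `h`, the intersection closure satisfies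
`τ(F) ≤ c * τ*(F) ^ (d' * ln τ*(F))`; in particular it has the weak ε-net property. -/
theorem compact_vc_helly_implies_weak_eps_net (d h : ℕ) (hd : 1 ≤ d) (hh : 1 ≤ h) :
    ∃ c d' : ℝ, 0 < c ∧ 0 < d' ∧
      ∀ (X : Type u) (S : Set (Set X)), CompactSystem S → VCDimLE S d → HellyLE S h →
        (∀ F : Finset (Set X), ↑F ⊆ interClosure S → ∀ t : ℝ, FracTransversalLE F t →
          (∀ s : ℝ, FracTransversalLE F s → t ≤ s) →
          ∃ n : ℕ, (n : ℝ) ≤ c * t ^ (d' * Real.log t) ∧ TransversalLE F n) ∧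
        WeakEpsNetProp (interClosure S) := by

  obtain ⟨c, d', hc, hc1, hd', hb⟩ := wen_bound d h hh
  refine ⟨c, d', hc, hd', ?_⟩
  intro X S hC hV hH
  have main : ∀ F : Finset (Set X), ↑F ⊆ interClosure S → ∀ t : ℝ, FracTransversalLE F t →
      ∃ n : ℕ, (F.Nonempty → (n : ℝ) ≤ c * t ^ (d' * Real.log t)) ∧ (¬ F.Nonempty → n = 0) ∧
        ∃ T : Finset X, T.card ≤ n ∧ ∀ K ∈ F, ∃ x ∈ T, x ∈ K := by
    intro F hF t ht
    by_cases hne : F.Nonempty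
    swap
    · rw [Finset.not_nonempty_iff_eq_empty] at hne
      subst hne
      exact ⟨0, by simp, by simp, ∅, by simp, by simp⟩
    obtain ⟨f, hf, hfK, hft⟩ := ht
    have hsub : ∀ K : Set X, ∑ x ∈ f.support.filter (fun x => x ∈ K), f x ≤ ∑ x ∈ f.support, f x :=
      fun K => Finset.sum_le_sum_of_subset_of_nonneg (Finset.filter_subset _ _)
        (fun x _ _ => (hf x).1)
    have hs1 : 1 ≤ ∑ x ∈ f.support, f x := by
      obtain ⟨K, hK⟩ := hne
      exact (hfK K hK).trans (hsub K)
    have ht1 : 1 ≤ t := hs1.trans hft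
    have ht0 : 0 < t := by linarith
    obtain ⟨k, R, hk, hk2, hR, hle⟩ := hb t ht1
    obtain ⟨T, hTc, hT⟩ := wen_main S d h hh hC hV hH f (fun x => (hf x).1) (1 / t) (by positivity)
      (by rw [div_le_one ht0]; exact ht1) k hk hk2 R (1 / t) f.support F le_rfl (by linarith) hF
      (by
        intro K hK
        refine le_trans ?_ (hfK K hK)
        rw [one_div_mul_eq_div, div_le_one ht0]
        exact hft) hR
    exact ⟨_, fun _ => hle, fun hc => absurd hne hc, T, hTc, hT⟩
  refine ⟨?_, ?_⟩
  · intro F hF t ht hmin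
    obtain ⟨n, hn, hn0, T, hTc, hT⟩ := main F hF t ht
    refine ⟨n, ?_, wen_transversal F T n hTc hT⟩
    by_cases hne : F.Nonempty
    · exact hn hne
    · have h0 : 0 ≤ t := by
        obtain ⟨f, hf, -, hft⟩ := ht
        exact (Finset.sum_nonneg (fun x _ => (hf x).1)).trans hft
      rw [hn0 hne]
      have := Real.rpow_nonneg h0 (d' * Real.log t)
      push_cast
      positivity
  · refine ⟨fun t => ⌊c * t ^ (d' * Real.log t)⌋₊, ?_⟩
    intro F hF t ht hmin
    obtain ⟨n, hn, hn0, T, hTc, hT⟩ := main F hF t ht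
    refine wen_transversal F T _ (hTc.trans ?_) hT
    by_cases hne : F.Nonempty
    · exact Nat.le_floor (hn hne)
    · rw [hn0 hne]; exact Nat.zero_le _
end

section
/- Let H = (V, E) be a finite k-uniform hypergraph with at least one edge, (X, C)_H its associated convexity space, and F = {S_{{v}} : v ∈ V} ⊆ C. Then the transversal number of F equals the chromatic number of H: τ(F) = χ(H). -/
open scoped Classical

universe u

theorem exists_maxIndep_aux {V : Type u} [Fintype V] [DecidableEq V]
    (E : Finset (Finset V)) (I : Set V) (hI : IsIndep E I) :
    ∃ J, I ⊆ J ∧ IsMaxIndep E J := by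
  obtain ⟨J, hIJ, hJ⟩ := Set.Finite.exists_le_maximal
    (Set.toFinite {J : Set V | IsIndep E J}) hI
  exact ⟨J, hIJ, hJ.1, fun K hK hJK => Set.Subset.antisymm (hJ.2 hK hJK) hJK⟩

/-- For the family `F = {S_{{v}} : v ∈ V}` in the associated convexity space of
a `k`-uniform hypergraph `H`, the transversal number of `F` equals the chromatic number of
`H`, i.e. the two minima agree. -/
theorem transversal_eq_chromatic {V : Type u} [Fintype V] [DecidableEq V] (k : ℕ)
    (E : Finset (Finset V)) (hunif : ∀ e ∈ E, e.card = k) (hne : E.Nonempty) :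
    ∀ n : ℕ,
      TransversalLE (Finset.univ.image fun v : V => SW E {v}) n ↔ ChromaticLE E n := by
  intro n
  constructor
  · rintro ⟨P, -, hex, hint⟩
    refine ⟨fun i => {v | SW E {v} ∈ P i}, fun v => hex _ (by simp), ?_⟩
    rintro i ⟨v, hv⟩ e he hsub
    obtain ⟨x, hx⟩ := hint i ⟨_, hv⟩
    refine x.2.1 e he fun w hw => ?_
    have h1 : x ∈ SW E {w} := hx _ (hsub hw)
    exact h1 rfl
  · rintro ⟨P, hex, hind⟩
    have hrep : ∀ K : Set (MIS E), ∃ v : Option V,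
        K ∈ (Finset.univ.image fun v : V => SW E {v}) → ∃ w, v = some w ∧ SW E {w} = K := by
      intro K
      by_cases hK : K ∈ (Finset.univ.image fun v : V => SW E {v})
      · obtain ⟨w, -, hw⟩ := Finset.mem_image.1 hK
        exact ⟨some w, fun _ => ⟨w, rfl, hw⟩⟩
      · exact ⟨none, fun h => absurd h hK⟩
    choose r hr using hrep
    refine ⟨fun i => (Finset.univ.image fun v : V => SW E {v}).filter
      (fun K => ∃ w, r K = some w ∧ w ∈ P i), fun i => Finset.filter_subset _ _, ?_, ?_⟩
    · intro K hK
      obtain ⟨w, hw, hwK⟩ := hr K hK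
      obtain ⟨i, hi, hu⟩ := hex w
      refine ⟨i, Finset.mem_filter.2 ⟨hK, w, hw, hi⟩, ?_⟩
      intro j hj
      obtain ⟨-, w', hw', hj⟩ := Finset.mem_filter.1 hj
      rw [hw] at hw'
      cases hw'
      exact hu j hj
    · rintro i ⟨K, hK⟩
      obtain ⟨-, w, -, hw⟩ := Finset.mem_filter.1 hK
      obtain ⟨J, hJ, hmax⟩ := exists_maxIndep_aux E (P i) (hind i ⟨w, hw⟩)
      refine ⟨⟨J, hmax⟩, ?_⟩
      intro L hL
      obtain ⟨hLF, u, hu, huP⟩ := Finset.mem_filter.1 hL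
      obtain ⟨u', hu', hL'⟩ := hr L hLF
      rw [hu] at hu'
      cases hu'
      rw [← hL']
      exact Set.singleton_subset_iff.2 (hJ huP)
end

section
/- Let m ≥ k ≥ 2 be integers and let H = (V, E) be a finite k-uniform hypergraph with at least one edge. Then H has property T_k(m) if and only if the colorful Helly number of the associated convexity space (X, C)_H is at most m. -/
open scoped Classical

universe u

theorem exists_mis_aux {V : Type u} [Fintype V] [DecidableEq V] (E : Finset (Finset V))
    (W : Set V) (hW : IsIndep E W) : ∃ σ : MIS E, W ⊆ σ.1 := by
  obtain ⟨M, hWM, hM⟩ := (Set.toFinite {I : Set V | IsIndep E I}).exists_le_maximal hW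
  exact ⟨⟨M, hM.1, fun J hJ hMJ => (hM.2 hJ hMJ).antisymm hMJ⟩, hWM⟩

/-- A `k`-uniform hypergraph has property `T_k(m)` if and only if the colorful
Helly number of its associated convexity space is at most `m`. -/
theorem propT_iff_colorful_helly {V : Type u} [Fintype V] [DecidableEq V] (m k : ℕ)
    (hk : 2 ≤ k) (hkm : k ≤ m) (E : Finset (Finset V))
    (hunif : ∀ e ∈ E, e.card = k) (hne : E.Nonempty) :
    PropT E k m ↔ ColorfulHellyLE (assocC E) m := by
  constructor
  · intro hT F hF hK
    by_contra hno
    push Not at hno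
    have hedge : ∀ i, ∃ e ∈ E, ∀ u ∈ e, ∃ K ∈ F i, ∀ σ ∈ K, u ∈ σ.1 := by
      intro i
      by_contra hcon
      have hind : IsIndep E {u | ∃ K ∈ F i, ∀ σ ∈ K, u ∈ σ.1} :=
        fun e he hsub => hcon ⟨e, he, fun u hu => hsub hu⟩
      obtain ⟨σ, hσ⟩ := exists_mis_aux E _ hind
      refine hno i ⟨σ, fun K hKF => ?_⟩
      obtain ⟨W, rfl⟩ := hF i hKF
      exact fun w hw => hσ ⟨_, hKF, fun τ hτ => hτ hw⟩
    choose e heE he using hedge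
    obtain ⟨g, v, hg, hv, hve, hvE⟩ := hT e heE
    have hch : ∀ i, ∃ K ∈ F i, ∀ j, g j = i → ∀ σ ∈ K, v j ∈ σ.1 := by
      intro i
      by_cases h : ∃ j, g j = i
      · obtain ⟨j, rfl⟩ := h
        obtain ⟨K, hKF, h2⟩ := he (g j) (v j) (hve j)
        refine ⟨K, hKF, fun j' hj' => ?_⟩
        rw [hg.injective hj']
        exact h2
      · have hpos : (e i).Nonempty := by
          rw [← Finset.card_pos, hunif _ (heE i)]
          omega
        obtain ⟨u, hu⟩ := hpos
        obtain ⟨K, hKF, -⟩ := he i u hu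
        exact ⟨K, hKF, fun j hj => (h ⟨j, hj⟩).elim⟩
    choose K hKF hKv using hch
    obtain ⟨σ, hσ⟩ := hK K hKF
    rw [Set.mem_iInter] at hσ
    refine σ.2.1 _ hvE ?_
    intro u hu
    simp only [Finset.coe_image, Finset.coe_univ, Set.image_univ, Set.mem_range] at hu
    obtain ⟨j, rfl⟩ := hu
    exact hKv (g j) j rfl σ (hσ (g j))
  · intro hC e heE
    by_contra hno
    have hres := hC (fun i => (e i).image (fun v => SW E {v})) ?_ ?_
    · obtain ⟨i, σ, hσ⟩ := hres
      refine σ.2.1 _ (heE i) fun u hu => ?_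
      have := hσ (SW E {u}) (Finset.mem_image_of_mem _ hu)
      exact this rfl
    · intro i K hK
      obtain ⟨v, -, rfl⟩ := Finset.mem_image.1 (Finset.mem_coe.1 hK)
      exact ⟨_, rfl⟩
    · intro K hK
      have h1 : ∀ i, ∃ w ∈ e i, SW E {w} = K i := fun i => Finset.mem_image.1 (hK i)
      choose w hwe hwK using h1
      by_cases hind : IsIndep E (Set.range w)
      · obtain ⟨σ, hσ⟩ := exists_mis_aux E _ hind
        refine ⟨σ, Set.mem_iInter.2 fun i => ?_⟩
        rw [← hwK i]
        intro u hu
        rw [Set.mem_singleton_iff.1 hu]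
        exact hσ ⟨i, rfl⟩
      · exfalso
        unfold IsIndep at hind
        push Not at hind
        obtain ⟨f, hfE, hf⟩ := hind
        have h2 : ∀ u : f, ∃ i, w i = u.1 := fun u => hf u.2
        choose ι hι using h2
        have hιinj : Function.Injective ι := by
          intro a b hab
          apply Subtype.ext
          rw [← hι a, ← hι b, hab]
        have hcard : (Finset.univ.image ι).card = k := by
          rw [Finset.card_image_of_injective _ hιinj, Finset.card_univ, Fintype.card_coe]
          exact hunif f hfE
        let g := (Finset.univ.image ι).orderEmbOfFin hcard
        have hgm : ∀ j, ∃ u : f, ι u = g j := fun j => by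
          have := Finset.orderEmbOfFin_mem (Finset.univ.image ι) hcard j
          obtain ⟨u, -, hu⟩ := Finset.mem_image.1 this
          exact ⟨u, hu⟩
        refine hno ⟨g, fun j => w (g j), g.strictMono, ?_, fun j => hwe _, ?_⟩
        · intro a b hab
          obtain ⟨x, hx⟩ := hgm a
          obtain ⟨y, hy⟩ := hgm b
          simp only [← hx, ← hy, hι] at hab
          apply g.injective
          rw [← hx, ← hy, Subtype.ext hab]
        · convert hfE using 1
          ext u
          simp only [Finset.mem_image, Finset.mem_univ, true_and]
          constructor
          · rintro ⟨j, rfl⟩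
            obtain ⟨x, hx⟩ := hgm j
            rw [← hx, hι]
            exact x.2
          · intro hu
            have : ι ⟨u, hu⟩ ∈ Set.range g := by
              rw [Finset.range_orderEmbOfFin]
              simp
            obtain ⟨j, hj⟩ := this
            exact ⟨j, by rw [hj, hι]⟩
end

section
/- Let H = (V, E) be a finite k-uniform hypergraph with at least one edge, X its family of maximal independent sets, and F = {S_{{v}} : v ∈ V}. Then the Helly number of the set system (X, F) equals k; moreover, h(X, C)_H = h(X, F) and h_c(X, C)_H = h_c(X, F), where (X, C)_H is the associated convexity space of H. -/
open scoped Classical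

universe u

section Helpers

theorem hx_extend {V : Type u} [Fintype V] [DecidableEq V] (E : Finset (Finset V))
    (I : Set V) (hI : IsIndep E I) : ∃ σ : MIS E, I ⊆ σ.1 := by
  obtain ⟨J, hIJ, hJ⟩ := (Set.toFinite {J : Set V | IsIndep E J}).exists_le_maximal hI
  exact ⟨⟨J, hJ.1, fun K hK hJK => Set.Subset.antisymm (hJ.2 hK hJK) hJK⟩, hIJ⟩

theorem hx_helly {V : Type u} [Fintype V] [DecidableEq V] (k : ℕ)
    (E : Finset (Finset V)) (hunif : ∀ e ∈ E, e.card = k) : HellyLE (assocC E) k := by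
  intro G hG hmin
  obtain ⟨h1, h2⟩ := hmin
  have h3 : ¬ IsIndep E {v | ∃ W, SW E W ∈ G ∧ v ∈ W} := by
    intro hI
    obtain ⟨σ, hσ⟩ := hx_extend E _ hI
    refine h1 ⟨σ, fun K hK => ?_⟩
    obtain ⟨W, rfl⟩ := hG hK
    exact fun v hv => hσ ⟨W, hK, hv⟩
  unfold IsIndep at h3
  push Not at h3
  obtain ⟨e, he, hsub⟩ := h3
  have h4 : ∀ v : e, ∃ W, SW E W ∈ G ∧ v.1 ∈ W := fun v => hsub v.2
  choose W hW hvW using h4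
  have h5 : G ⊆ Finset.univ.image (fun v : e => SW E (W v)) := by
    intro K hK
    by_contra hn
    obtain ⟨σ, hσ⟩ := h2 K hK
    refine σ.2.1 e he fun v hv => ?_
    have h6 : σ ∈ SW E (W ⟨v, hv⟩) := by
      refine hσ _ (Finset.mem_erase.2 ⟨?_, hW _⟩)
      rintro rfl
      exact hn (Finset.mem_image.2 ⟨⟨v, hv⟩, Finset.mem_univ _, rfl⟩)
    exact h6 (hvW _)
  calc G.card ≤ _ := Finset.card_le_card h5
    _ ≤ _ := Finset.card_image_le
    _ = k := by simp [hunif e he]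

theorem hx_exists {V : Type u} [Fintype V] [DecidableEq V] (k : ℕ)
    (E : Finset (Finset V)) (hunif : ∀ e ∈ E, e.card = k) (hne : E.Nonempty) :
    ∃ G : Finset (Set (MIS E)),
        ↑G ⊆ {T : Set (MIS E) | ∃ v : V, T = SW E {v}} ∧ G.card = k ∧
        MinNonIntersecting G := by
  obtain ⟨e, he⟩ := hne
  have key : ∀ v ∈ e, ∃ σ : MIS E, v ∉ σ.1 ∧ ∀ w ∈ e, w ≠ v → w ∈ σ.1 := by
    intro v hv
    have hI : IsIndep E (↑(e.erase v) : Set V) := by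
      intro f hf hsub
      have := Finset.card_le_card (Finset.coe_subset.1 hsub)
      rw [hunif f hf, Finset.card_erase_of_mem hv, hunif e he] at this
      have : 0 < e.card := Finset.card_pos.2 ⟨v, hv⟩
      have := hunif e he
      omega
    obtain ⟨σ, hσ⟩ := hx_extend E _ hI
    have h7 : ∀ w ∈ e, w ≠ v → w ∈ σ.1 := fun w hw hwv =>
      hσ (Finset.mem_coe.2 (Finset.mem_erase.2 ⟨hwv, hw⟩))
    refine ⟨σ, fun hvσ => σ.2.1 e he fun w hw => ?_, h7⟩
    by_cases hwv : w = v
    · rw [hwv]; exact hvσ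
    · exact h7 w hw hwv
  refine ⟨e.image (fun v => SW E {v}), ?_, ?_, ?_, ?_⟩
  · intro T hT
    obtain ⟨v, -, rfl⟩ := Finset.mem_image.1 (Finset.mem_coe.1 hT)
    exact ⟨v, rfl⟩
  · rw [Finset.card_image_of_injOn, hunif e he]
    intro v hv w hw hvw
    by_contra hne
    obtain ⟨σ, h8, h9⟩ := key v hv
    have h10 : σ ∈ SW E {w} := Set.singleton_subset_iff.2 (h9 w hw (Ne.symm hne))
    have hvw' : SW E {v} = SW E {w} := hvw
    rw [← hvw'] at h10
    exact h8 (h10 rfl)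
  · rintro ⟨σ, hσ⟩
    exact σ.2.1 e he fun v hv => hσ _ (Finset.mem_image_of_mem _ hv) rfl
  · intro K hK
    obtain ⟨v, hv, rfl⟩ := Finset.mem_image.1 hK
    obtain ⟨σ, -, h9⟩ := key v hv
    refine ⟨σ, fun L hL => ?_⟩
    obtain ⟨hLne, hL⟩ := Finset.mem_erase.1 hL
    obtain ⟨w, hw, rfl⟩ := Finset.mem_image.1 hL
    refine Set.singleton_subset_iff.2 (h9 w hw ?_)
    rintro rfl
    exact hLne rfl

end Helpers

/-- For a `k`-uniform hypergraph with at least one edge, the Helly number of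
the system `F = {S_{{v}} : v ∈ V}` equals `k`; moreover, the Helly and colorful Helly
numbers of the associated convexity space agree with those of `(X, F)`. -/
theorem helly_number_of_vertex_system {V : Type u} [Fintype V] [DecidableEq V] (k : ℕ)
    (E : Finset (Finset V)) (hunif : ∀ e ∈ E, e.card = k) (hne : E.Nonempty) :
    (∃ G : Finset (Set (MIS E)),
        ↑G ⊆ {T : Set (MIS E) | ∃ v : V, T = SW E {v}} ∧ G.card = k ∧
        MinNonIntersecting G) ∧
    HellyLE {T : Set (MIS E) | ∃ v : V, T = SW E {v}} k ∧
    (∀ n : ℕ, HellyLE (assocC E) n ↔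
      HellyLE {T : Set (MIS E) | ∃ v : V, T = SW E {v}} n) ∧
    (∀ m : ℕ, ColorfulHellyLE (assocC E) m ↔
      ColorfulHellyLE {T : Set (MIS E) | ∃ v : V, T = SW E {v}} m) := by
  have hsub : {T : Set (MIS E) | ∃ v : V, T = SW E {v}} ⊆ assocC E := by
    rintro T ⟨v, rfl⟩
    exact ⟨_, rfl⟩
  have hH := hx_helly k E hunif
  have hex := hx_exists k E hunif hne
  refine ⟨hex, fun F hF => hH F (hF.trans hsub),
    fun n => ⟨fun h F hF => h F (hF.trans hsub), fun h F hF hm => ?_⟩,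
    fun m => ⟨fun h F hF => h F (fun i => (hF i).trans hsub), fun h F hF hK => ?_⟩⟩
  · obtain ⟨G, hG, hc, hGm⟩ := hex
    have h1 := h G hG hGm
    have h2 := hH F hF hm
    omega
  · have hh := h (fun i => (Finset.univ.filter
        (fun v => ∃ W, SW E W ∈ F i ∧ v ∈ W)).image (fun v => SW E {v}))
    have g1 := hh ?_ ?_
    rotate_left
    · intro i T hT
      obtain ⟨v, -, rfl⟩ := Finset.mem_image.1 (Finset.mem_coe.1 hT)
      exact ⟨v, rfl⟩
    · intro K hKF
      have h4 : ∀ i, ∃ L ∈ F i, L ⊆ K i := by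
        intro i
        obtain ⟨v, hv, hvK⟩ := Finset.mem_image.1 (hKF i)
        obtain ⟨W, hW, hvW⟩ := (Finset.mem_filter.1 hv).2
        refine ⟨_, hW, ?_⟩
        rw [← hvK]
        exact fun σ hσ => Set.singleton_subset_iff.2 (hσ hvW)
      choose L hL hLK using h4
      exact (hK L hL).mono (Set.iInter_mono hLK)
    obtain ⟨i, σ, hσ⟩ := g1
    refine ⟨i, σ, fun K hKF => ?_⟩
    obtain ⟨W, rfl⟩ := hF i hKF
    intro v hv
    have h3 : σ ∈ SW E {v} := hσ _ (Finset.mem_image_of_mem _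
      (Finset.mem_filter.2 ⟨Finset.mem_univ _, W, hKF, hv⟩))
    exact h3 rfl
end
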